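/- Let (R, 𝔪, k) be a regular local ring of dimension 3. Let (m, n, r) be a tuple of positive integers with r = m − 3(n−1) ≥ 2, n ≥ 2, and m ≥ 2n+3 ≥ 7. Then there exists an ideal J ⊆ R with pd_R(R/J) = 3 such that R/J has Tor-algebra class G(r) and realizes the tuple (m, n, r): the minimal free resolution 0 → F_3 → F_2 → F_1 → R of R/J has rank_R(F_1) = m and rank_R(F_3) = n. -/

import Mathlib

open IsLocalRing

/-- `R/J` has projective dimension 3, Tor-algebra class `G(r)` (normal form
`f̄₁ⁱ f̄₂ⁱ = f̄₃¹` for `1 ≤ i ≤ r`, all other products of basis elements zero)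
and realizes the tuple `(m, n, r)`: its minimal free resolution
`0 → F₃ → F₂ → F₁ → R` has `rank F₁ = m` and `rank F₃ = n`. -/
def HasTorClassGWithRanks (R : Type) [CommRing R] [IsLocalRing R]
    (J : Ideal R) (m n r : ℕ) : Prop :=
  ∃ (n2 : ℕ) (h3 : 0 < n), r ≤ m ∧ r ≤ n2 ∧
  ∃ (d1 : (Fin m → R) →ₗ[R] R) (d2 : (Fin n2 → R) →ₗ[R] (Fin m → R))
    (d3 : (Fin n → R) →ₗ[R] (Fin n2 → R))
    (m11 : (Fin m → R) →ₗ[R] (Fin m → R) →ₗ[R] (Fin n2 → R))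
    (m12 : (Fin m → R) →ₗ[R] (Fin n2 → R) →ₗ[R] (Fin n → R)),
    -- minimal free resolution of `R/J`
    LinearMap.range d1 = J ∧
    LinearMap.ker d1 = LinearMap.range d2 ∧
    LinearMap.ker d2 = LinearMap.range d3 ∧
    LinearMap.ker d3 = ⊥ ∧
    (∀ v, d1 v ∈ maximalIdeal R) ∧
    (∀ v, d2 v ∈ maximalIdeal R • (⊤ : Submodule R (Fin m → R))) ∧
    (∀ v, d3 v ∈ maximalIdeal R • (⊤ : Submodule R (Fin n2 → R))) ∧
    -- DG-algebra axioms
    (∀ a b, d2 (m11 a b) = d1 a • b - d1 b • a) ∧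
    (∀ a, m11 a a = 0) ∧ (∀ a b, m11 a b = - m11 b a) ∧
    (∀ a z, d3 (m12 a z) = d1 a • z - m11 a (d2 z)) ∧
    (∀ a b c, m12 c (m11 a b) = m12 a (m11 b c)) ∧
    -- `G(r)` normal form for the induced products on `F ⊗ k`
    (∀ a b : Fin m, m11 (Pi.single a 1) (Pi.single b 1) ∈
      maximalIdeal R • (⊤ : Submodule R (Fin n2 → R))) ∧
    (∀ (a : Fin m) (b : Fin n2),
      m12 (Pi.single a 1) (Pi.single b 1) -
        (if (a : ℕ) = (b : ℕ) ∧ (a : ℕ) < r then Pi.single (⟨0, h3⟩ : Fin n) 1 else 0) ∈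
      maximalIdeal R • (⊤ : Submodule R (Fin n → R)))

/-!
The submaximal Pfaffians `g` of a suitable alternating `(2k+1) × (2k+1)` matrix `φ` generate a
Gorenstein ideal of grade three; a matrix with powers of `x₂` on the antidiagonal and `x₀²`, `x₁²`
next to it will do. Trimming, that is, replacing `n - 1` of the generators `g t` by
`x₀ g t, x₁ g t, x₂ g t`, gives an ideal that is resolved by the mapping cone of lifts of the
corresponding coordinates of the resolution `(g, φ)` to Koszul complexes on `x`. The perfect pairing
`F₁ ⊗ F₂ → F₃` of the Gorenstein resolution survives on the untouched generators, and all other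
products vanish modulo `𝔪`. Hence the class is `G(r)` with `r = 2k + 1 - (n - 1)`.

This gives the case of even `r + n`. For odd `r + n` the exponent of `x₂` in the outermost
antidiagonal entry is lowered to one: that row of `φ` then expresses `x₂ g t` for one trimmed
generator `g t` in terms of the other generators, so that one summand `R` cancels from `F₁` and from
`F₂`, and `r` drops by one.
-/

namespace TorClassG

open Matrix

section Koszul

variable {R : Type*} [CommRing R]

theorem dotProduct_mem_of_left {ι : Type*} [Fintype ι] {J : Ideal R} {y : ι → R}
    (hy : ∀ i, y i ∈ J) (c : ι → R) : y ⬝ᵥ c ∈ J :=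
  J.sum_mem fun i _ ↦ J.mul_mem_right _ (hy i)

theorem dotProduct_mem_of_right {ι : Type*} [Fintype ι] {J : Ideal R} {c : ι → R}
    (hc : ∀ i, c i ∈ J) (y : ι → R) : y ⬝ᵥ c ∈ J :=
  J.sum_mem fun i _ ↦ J.mul_mem_left _ (hc i)

theorem apply_eq_dotProduct_apply_single {ι : Type*} [Fintype ι] [DecidableEq ι]
    (f : (ι → R) →ₗ[R] R) (v : ι → R) : f v = v ⬝ᵥ fun i ↦ f (Pi.single i 1) := by
  conv_lhs => rw [← Finset.univ_sum_single v, map_sum]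
  refine Finset.sum_congr rfl fun i _ ↦ ?_
  rw [← smul_eq_mul, ← map_smul, ← Pi.single_smul, smul_eq_mul, mul_one]

theorem mem_span_range_self {ι : Type*} (y : ι → R) (i : ι) : y i ∈ Ideal.span (Set.range y) :=
  Ideal.subset_span ⟨i, rfl⟩

theorem exists_dotProduct_eq_of_mem_mul_span {ι : Type*} [Fintype ι] {J : Ideal R} {y : ι → R}
    {a : R} (ha : a ∈ J * Ideal.span (Set.range y)) : ∃ b : ι → R, (∀ i, b i ∈ J) ∧ y ⬝ᵥ b = a := by
  rw [← smul_eq_mul, Ideal.span, Submodule.mem_ideal_smul_span_iff_exists_sum] at ha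
  obtain ⟨b, hb, rfl⟩ := ha
  refine ⟨b, hb, ?_⟩
  rw [Finsupp.sum_fintype _ _ fun i ↦ zero_smul R (y i), dotProduct]
  simp only [smul_eq_mul, mul_comm]

theorem cross_mem_of_left {J : Ideal R} {y : Fin 3 → R} (hy : ∀ i, y i ∈ J) (μ : Fin 3 → R)
    (j : Fin 3) : (y ⨯₃ μ) j ∈ J := by
  rw [cross_apply]
  fin_cases j <;> exact sub_mem (J.mul_mem_right _ (hy _)) (J.mul_mem_right _ (hy _))

/-- The Koszul complex `0 → R → R³ → R³ → R` on `x`, whose differentials are `l ↦ l • x`,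
`μ ↦ x ⨯₃ μ` and `c ↦ x ⬝ᵥ c`, is exact except at its right end. -/
structure IsKoszulAcyclic (x : Fin 3 → R) : Prop where
  exists_eq_cross : ∀ c, x ⬝ᵥ c = 0 → ∃ μ, c = x ⨯₃ μ
  exists_eq_smul : ∀ μ, x ⨯₃ μ = 0 → ∃ l : R, μ = l • x
  eq_zero_of_smul_eq_zero : ∀ l : R, l • x = 0 → l = 0

theorem syzygies_of_isWeaklyRegular {a b c : R}
    (h : RingTheory.Sequence.IsWeaklyRegular R [a, b, c]) :
    (∀ u, a * u = 0 → u = 0) ∧ (∀ u v, b * u = a * v → ∃ w, u = a * w) ∧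
      ∀ u v w, c * u = a * v + b * w → ∃ d e, u = a * d + b * e := by
  have ha := h.regular_mod_prev 0 (by simp)
  have hb := h.regular_mod_prev 1 (by simp)
  have hc := h.regular_mod_prev 2 (by simp)
  simp only [isSMulRegular_quotient_iff_mem_of_smul_mem] at ha hb hc
  refine ⟨by simpa using ha, fun u v huv ↦ ?_, fun u v w huv ↦ ?_⟩
  · have := hb u (by simpa [Ideal.mem_span_singleton'] using ⟨v, by rw [huv, mul_comm]⟩)
    obtain ⟨w, hw⟩ : ∃ w, w * a = u := by simpa [Ideal.mem_span_singleton'] using this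
    exact ⟨w, by rw [← hw, mul_comm]⟩
  · have := hc u (by
      simpa [Ideal.ofList_cons, ← Ideal.span_insert, Ideal.mem_span_pair] using
        ⟨v, w, by rw [huv, mul_comm, mul_comm w]⟩)
    obtain ⟨d, e, hde⟩ : ∃ d e, d * a + e * b = u := by
      simpa [Ideal.ofList_cons, ← Ideal.span_insert, Ideal.mem_span_pair] using this
    exact ⟨d, e, by rw [← hde, mul_comm, mul_comm e]⟩

theorem isKoszulAcyclic_of_isWeaklyRegular {x : Fin 3 → R}
    (h : RingTheory.Sequence.IsWeaklyRegular R [x 0, x 1, x 2]) : IsKoszulAcyclic x := by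
  obtain ⟨h0, h1, h2⟩ := syzygies_of_isWeaklyRegular h
  refine ⟨fun c hc ↦ ?_, fun μ hμ ↦ ?_, fun l hl ↦ h0 l ?_⟩
  · rw [dotProduct, Fin.sum_univ_three] at hc
    obtain ⟨d, e, hde⟩ := h2 (c 2) (-c 0) (-c 1) (by linear_combination hc)
    obtain ⟨f, hf⟩ := h1 (c 1 + x 2 * e) (-(c 0 + x 2 * d))
      (by linear_combination hc - x 2 * hde)
    have hd : c 0 + x 2 * d + x 1 * f = 0 :=
      h0 _ (by linear_combination hc - x 2 * hde - x 1 * hf)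
    refine ⟨![-e, d, -f], funext <| Fin.forall_fin_succ.2 ⟨?_, Fin.forall_fin_two.2 ⟨?_, ?_⟩⟩⟩ <;>
      simp only [cross_apply] <;> simp
    · linear_combination hd
    · linear_combination hf
    · linear_combination hde
  · rw [cross_apply] at hμ
    obtain ⟨-, e1, e2⟩ : x 1 * μ 2 - x 2 * μ 1 = 0 ∧ x 2 * μ 0 - x 0 * μ 2 = 0 ∧
      x 0 * μ 1 - x 1 * μ 0 = 0 := ⟨congrFun hμ 0, congrFun hμ 1, congrFun hμ 2⟩
    obtain ⟨l, hl⟩ := h1 (μ 0) (μ 1) (by linear_combination -e2)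
    have hl1 : μ 1 - x 1 * l = 0 := h0 _ (by linear_combination e2 + x 1 * hl)
    have hl2 : μ 2 - x 2 * l = 0 := h0 _ (by linear_combination -e1 + x 2 * hl)
    refine ⟨l, funext <| Fin.forall_fin_succ.2 ⟨?_, Fin.forall_fin_two.2 ⟨?_, ?_⟩⟩⟩ <;> simp
    · linear_combination hl
    · linear_combination hl1
    · linear_combination hl2
  · simpa [mul_comm] using congrFun hl 0

namespace IsKoszulAcyclic

variable {x : Fin 3 → R} (hx : IsKoszulAcyclic x)
include hx

theorem mem_of_dotProduct_eq_zero {c : Fin 3 → R} (hc : x ⬝ᵥ c = 0) (j : Fin 3) :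
    c j ∈ Ideal.span (Set.range x) := by
  obtain ⟨μ, rfl⟩ := hx.exists_eq_cross c hc
  exact cross_mem_of_left (mem_span_range_self x) μ j

theorem mem_of_dotProduct_mem_sq {c : Fin 3 → R}
    (hc : x ⬝ᵥ c ∈ Ideal.span (Set.range x) * Ideal.span (Set.range x)) (j : Fin 3) :
    c j ∈ Ideal.span (Set.range x) := by
  obtain ⟨b, hb, hbc⟩ := exists_dotProduct_eq_of_mem_mul_span hc
  have := hx.mem_of_dotProduct_eq_zero (c := c - b) (by rw [dotProduct_sub, hbc, sub_self]) j
  simpa using add_mem this (hb j)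

theorem mem_of_cross_mem_sq {μ : Fin 3 → R}
    (hμ : ∀ j ≠ 2, (x ⨯₃ μ) j ∈ Ideal.span (Set.range x) * Ideal.span (Set.range x)) (j : Fin 3) :
    μ j ∈ Ideal.span (Set.range x) := by
  rw [cross_apply] at hμ
  have key (c : Fin 3 → R) (hc : x 0 * c 0 + x 1 * c 1 + x 2 * c 2 ∈ _) :=
    hx.mem_of_dotProduct_mem_sq (c := c) (by rwa [dotProduct, Fin.sum_univ_three])
  have h₀ := key ![0, μ 2, -μ 1] (by simpa [sub_eq_add_neg] using hμ 0 (by decide))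
  have h₁ := key ![-μ 2, 0, μ 0] (by simpa [sub_eq_neg_add] using hμ 1 (by decide))
  fin_cases j
  · exact h₁ 2
  · exact neg_mem_iff.1 (h₀ 2)
  · exact h₀ 1

theorem mem_of_sq_dotProduct_eq_zero {u : Fin 3 → R} (hu : (fun j ↦ x j ^ 2) ⬝ᵥ u = 0)
    (j : Fin 3) : u j ∈ Ideal.span (Set.range x) := by
  obtain ⟨μ, hμ⟩ := hx.exists_eq_cross (fun j ↦ x j * u j)
    (by simpa [dotProduct, sq, mul_assoc] using hu)
  rw [cross_apply] at hμ
  obtain ⟨h0, h1, h2⟩ : x 0 * u 0 = x 1 * μ 2 - x 2 * μ 1 ∧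
    x 1 * u 1 = x 2 * μ 0 - x 0 * μ 2 ∧ x 2 * u 2 = x 0 * μ 1 - x 1 * μ 0 :=
    ⟨congrFun hμ 0, congrFun hμ 1, congrFun hμ 2⟩
  have key (c : Fin 3 → R) (hc : x 0 * c 0 + x 1 * c 1 + x 2 * c 2 = 0) :=
    hx.mem_of_dotProduct_eq_zero (c := c) (by rwa [dotProduct, Fin.sum_univ_three])
  fin_cases j
  · exact key ![u 0, -μ 2, μ 1] (by simp; linear_combination h0) 0
  · exact key ![μ 2, u 1, -μ 0] (by simp; linear_combination h1) 1
  · exact key ![-μ 1, μ 0, u 2] (by simp; linear_combination h2) 2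

end IsKoszulAcyclic

end Koszul

section SmulTop

variable {R M N : Type*} [CommRing R] [AddCommGroup M] [Module R M] [AddCommGroup N] [Module R N]

theorem map_mem_smul_top {J : Ideal R} (f : M →ₗ[R] N) {v : M}
    (hv : v ∈ J • (⊤ : Submodule R M)) : f v ∈ J • (⊤ : Submodule R N) := by
  have := Submodule.mem_map_of_mem (f := f) hv
  rw [Submodule.map_smul''] at this
  exact Submodule.smul_mono le_rfl le_top this

theorem mem_smul_top_self {J : Ideal R} {a : R} : a ∈ J • (⊤ : Submodule R R) ↔ a ∈ J := by
  rw [smul_eq_mul, Ideal.mul_top]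

theorem map_mem_mul {I J : Ideal R} {f : M →ₗ[R] R} (hf : ∀ v, f v ∈ I) {v : M}
    (hv : v ∈ J • (⊤ : Submodule R M)) : f v ∈ J * I := by
  refine Submodule.smul_induction_on hv (fun r hr w _ ↦ ?_) fun v w hv hw ↦ ?_
  · rw [map_smul, smul_eq_mul]
    exact Ideal.mul_mem_mul hr (hf w)
  · rw [map_add]
    exact add_mem hv hw

theorem mem_smul_top_pi {ι : Type*} [Finite ι] {J : Ideal R} {v : ι → M} :
    v ∈ J • (⊤ : Submodule R (ι → M)) ↔ ∀ i, v i ∈ J • (⊤ : Submodule R M) := by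
  classical
  cases nonempty_fintype ι
  refine ⟨fun hv i ↦ map_mem_smul_top (LinearMap.proj i) hv, fun hv ↦ ?_⟩
  rw [← Finset.univ_sum_single v]
  exact sum_mem fun i _ ↦ map_mem_smul_top (LinearMap.single R (fun _ ↦ M) i) (hv i)

theorem mem_smul_top_pi_self {ι : Type*} [Finite ι] {J : Ideal R} {v : ι → R} :
    v ∈ J • (⊤ : Submodule R (ι → R)) ↔ ∀ i, v i ∈ J := by
  simp only [mem_smul_top_pi, mem_smul_top_self]

theorem mem_smul_top_prod {J : Ideal R} {v : M × N} :
    v ∈ J • (⊤ : Submodule R (M × N)) ↔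
      v.1 ∈ J • (⊤ : Submodule R M) ∧ v.2 ∈ J • (⊤ : Submodule R N) := by
  refine ⟨fun hv ↦ ⟨map_mem_smul_top (LinearMap.fst R M N) hv,
    map_mem_smul_top (LinearMap.snd R M N) hv⟩, fun ⟨h1, h2⟩ ↦ ?_⟩
  rw [← Prod.fst_add_snd v]
  exact add_mem (map_mem_smul_top (LinearMap.inl R M N) h1)
    (map_mem_smul_top (LinearMap.inr R M N) h2)

end SmulTop

section DGProduct

variable {R F₁ F₂ F₃ : Type*} [CommRing R] [AddCommGroup F₁] [Module R F₁]
  [AddCommGroup F₂] [Module R F₂] [AddCommGroup F₃] [Module R F₃]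

/-- The products `m₁₁ : F₁ ⊗ F₁ → F₂` and `m₁₂ : F₁ ⊗ F₂ → F₃` of a graded-commutative
differential graded algebra structure on a complex `F₃ → F₂ → F₁ → R`. When `d₃` is injective,
associativity is a consequence of the Leibniz rules. -/
structure IsDGProduct (d₁ : F₁ →ₗ[R] R) (d₂ : F₂ →ₗ[R] F₁) (d₃ : F₃ →ₗ[R] F₂)
    (m₁₁ : F₁ →ₗ[R] F₁ →ₗ[R] F₂) (m₁₂ : F₁ →ₗ[R] F₂ →ₗ[R] F₃) : Prop where
  leibniz₁₁ : ∀ a b, d₂ (m₁₁ a b) = d₁ a • b - d₁ b • a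
  mul_self : ∀ a, m₁₁ a a = 0
  leibniz₁₂ : ∀ a z, d₃ (m₁₂ a z) = d₁ a • z - m₁₁ a (d₂ z)

variable {d₁ : F₁ →ₗ[R] R} {d₂ : F₂ →ₗ[R] F₁} {d₃ : F₃ →ₗ[R] F₂}
  {m₁₁ : F₁ →ₗ[R] F₁ →ₗ[R] F₂} {m₁₂ : F₁ →ₗ[R] F₂ →ₗ[R] F₃}

theorem IsDGProduct.mul_swap (h : IsDGProduct d₁ d₂ d₃ m₁₁ m₁₂) (a b : F₁) :
    m₁₁ a b = -m₁₁ b a := by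
  have := h.mul_self (a + b)
  simp only [map_add, LinearMap.add_apply, h.mul_self, zero_add, add_zero] at this
  exact eq_neg_of_add_eq_zero_right this

theorem IsDGProduct.assoc (h : IsDGProduct d₁ d₂ d₃ m₁₁ m₁₂) (hd₃ : Function.Injective d₃)
    (a b c : F₁) : m₁₂ c (m₁₁ a b) = m₁₂ a (m₁₁ b c) := by
  apply hd₃
  simp only [h.leibniz₁₂, h.leibniz₁₁, map_sub, map_smul]
  rw [h.mul_swap c a, h.mul_swap c b]
  module

theorem exists_alternating_mul {ι : Type*} (e : Module.Basis ι R F₁)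
    (h₁₂ : LinearMap.ker d₁ = LinearMap.range d₂) :
    ∃ m₁₁ : F₁ →ₗ[R] F₁ →ₗ[R] F₂,
      (∀ a b, d₂ (m₁₁ a b) = d₁ a • b - d₁ b • a) ∧ ∀ a, m₁₁ a a = 0 := by
  classical
  have hL (p q : ι) : ∃ z, d₂ z = d₁ (e p) • e q - d₁ (e q) • e p :=
    LinearMap.mem_range.1 <| h₁₂ ▸ LinearMap.mem_ker.2 (by simp [mul_comm])
  choose L hL using hL
  let S : F₁ →ₗ[R] F₁ →ₗ[R] F₂ :=
    e.constr R fun p ↦ e.constr R fun q ↦ if WellOrderingRel p q then L p q else 0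
  refine ⟨S - S.flip, fun a b ↦ ?_, fun a ↦ by simp⟩
  let lhs := (S - S.flip).compr₂ d₂
  let rhs := (LinearMap.lsmul R F₁).comp d₁ - ((LinearMap.lsmul R F₁).comp d₁).flip
  suffices lhs = rhs from congr($this a b)
  refine LinearMap.ext_basis e e fun p q ↦ ?_
  simp only [lhs, rhs, S, LinearMap.compr₂_apply, LinearMap.sub_apply, LinearMap.flip_apply,
    LinearMap.comp_apply, LinearMap.lsmul_apply, e.constr_basis]
  rcases trichotomous_of WellOrderingRel p q with hpq | rfl | hqp
  · rw [if_pos hpq, if_neg (asymm hpq), sub_zero, hL]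
  · simp
  · rw [if_neg (asymm hqp), if_pos hqp, zero_sub, map_neg, hL, neg_sub]

theorem exists_isDGProduct {ι : Type*} (e : Module.Basis ι R F₁)
    (h₁₂ : LinearMap.ker d₁ = LinearMap.range d₂) (h₂₃ : LinearMap.ker d₂ = LinearMap.range d₃)
    (hd₃ : Function.Injective d₃) : ∃ m₁₁ m₁₂, IsDGProduct d₁ d₂ d₃ m₁₁ m₁₂ := by
  obtain ⟨m₁₁, leibniz, alt⟩ := exists_alternating_mul e h₁₂
  have hd (z) : d₁ (d₂ z) = 0 := LinearMap.mem_ker.1 (h₁₂ ▸ ⟨z, rfl⟩)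
  have hM (a z) : ∃ w, d₃ w = d₁ a • z - m₁₁ a (d₂ z) :=
    LinearMap.mem_range.1 <| h₂₃ ▸ LinearMap.mem_ker.2 (by simp [leibniz, hd])
  choose M hM using hM
  refine ⟨m₁₁, LinearMap.mk₂ R M ?_ ?_ ?_ ?_, leibniz, alt, hM⟩ <;> intros <;> apply hd₃ <;>
    simp only [hM, map_add, map_smul, LinearMap.add_apply, LinearMap.smul_apply, smul_eq_mul] <;>
    module

end DGProduct

section Trimming

open Sum

variable {R : Type*} [CommRing R]

/-- `0 → R → R^ι → R^ι → R`, with differentials `g`, `φ` and `g ⬝ᵥ ·`, is a free resolution of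
`R ⧸ (g)` that is minimal modulo the ideal `I`, and (last field) products of two elements of degree
one of the resolution vanish modulo `I`. By its symmetry such a quotient is Gorenstein of grade
three. -/
structure IsGorensteinResolution {ι : Type*} [Fintype ι] (I : Ideal R) (g : ι → R)
    (φ : (ι → R) →ₗ[R] ι → R) : Prop where
  mem_sq : ∀ i, g i ∈ I * I
  map_mem : ∀ v i, φ v i ∈ I
  dotProduct_map : ∀ v, g ⬝ᵥ φ v = 0
  map_self : φ g = 0
  exists_map_eq : ∀ u, g ⬝ᵥ u = 0 → ∃ v, φ v = u
  exists_eq_smul : ∀ v, φ v = 0 → ∃ c : R, v = c • g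
  eq_zero_of_smul_eq_zero : ∀ c : R, c • g = 0 → c = 0
  mem_of_map_mem : ∀ v, (∀ i, φ v i ∈ Ideal.span (Set.range g)) → ∀ i, v i ∈ I

theorem IsGorensteinResolution.functional_mem {ι : Type*} [Fintype ι] {I : Ideal R} {g : ι → R}
    {φ : (ι → R) →ₗ[R] ι → R} (h : IsGorensteinResolution I g φ) {f : (ι → R) →ₗ[R] R}
    (hf : f g = 0) (v : ι → R) : f v ∈ I := by
  classical
  obtain ⟨w, hw⟩ := h.exists_map_eq (fun i ↦ f (Pi.single i 1))
    (by rw [← apply_eq_dotProduct_apply_single, hf])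
  rw [apply_eq_dotProduct_apply_single, ← hw]
  exact dotProduct_mem_of_right (h.map_mem w) v

/-- `Ξ` and `q` lift the `i`-th coordinate of the resolution `(g, φ)` to the Koszul complex
on `x`; they are the components of the comparison maps that enter the mapping cone
resolving the ideal in which the generator `g i` is replaced by `x₀ g i, x₁ g i, x₂ g i`. -/
structure IsKoszulLift {ι : Type*} (x : Fin 3 → R) (g : ι → R) (φ : (ι → R) →ₗ[R] ι → R) (i : ι)
    (Ξ : (ι → R) →ₗ[R] Fin 3 → R) (q : Fin 3 → R) : Prop where
  dotProduct_map : ∀ v, x ⬝ᵥ Ξ v = φ v i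
  map_mem : ∀ v, ∀ j ≠ 2, Ξ v j ∈ Ideal.span (Set.range x)
  cross_eq : x ⨯₃ q = Ξ g
  mem_sq : ∀ j, q j ∈ Ideal.span (Set.range x) * Ideal.span (Set.range x)

/-- A Gorenstein resolution whose generators `g (inr t)` are to be trimmed, that is, multiplied by
the ideal `(x₀, x₁, x₂)`. For `s : σ` the column of `φ` indexed by `inl (inr s)` makes the generator
`x₂ * g (inr (inl s))` redundant. -/
structure IsTrimming {ρ σ τ : Type*} [Fintype ρ] [Fintype σ] [Fintype τ] (x : Fin 3 → R)
    (g : (ρ ⊕ σ) ⊕ (σ ⊕ τ) → R) (φ : ((ρ ⊕ σ) ⊕ (σ ⊕ τ) → R) →ₗ[R] (ρ ⊕ σ) ⊕ (σ ⊕ τ) → R)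
    (Ξ : σ ⊕ τ → ((ρ ⊕ σ) ⊕ (σ ⊕ τ) → R) →ₗ[R] Fin 3 → R) (q : σ ⊕ τ → Fin 3 → R) : Prop where
  koszul : IsKoszulAcyclic x
  gorenstein : IsGorensteinResolution (Ideal.span (Set.range x)) g φ
  lift : ∀ t, IsKoszulLift x g φ (inr t) (Ξ t) (q t)
  lift_inl_two : ∀ s v, Ξ (inl s) v 2 = v (inl (inr s))
  lift_inr_two_mem : ∀ t v, Ξ (inr t) v 2 ∈ Ideal.span (Set.range x)

namespace Trimmed

variable {ρ σ τ : Type*} (x : Fin 3 → R) (g : (ρ ⊕ σ) ⊕ (σ ⊕ τ) → R)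
  (φ : ((ρ ⊕ σ) ⊕ (σ ⊕ τ) → R) →ₗ[R] (ρ ⊕ σ) ⊕ (σ ⊕ τ) → R)
  (Ξ : σ ⊕ τ → ((ρ ⊕ σ) ⊕ (σ ⊕ τ) → R) →ₗ[R] Fin 3 → R) (q : σ ⊕ τ → Fin 3 → R)

/-- The coefficients of `x₀ g t, x₁ g t, x₂ g t` in degree one of the trimmed complex. In the
second factor of this module, `g (inl (inr s))` takes the place of the redundant generator
`x₂ * g (inr (inl s))`. -/
def koszulPart : (ρ → R) × (σ ⊕ τ → Fin 3 → R) →ₗ[R] σ ⊕ τ → Fin 3 → R where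
  toFun u := Sum.elim (fun s ↦ ![u.2 (inl s) 0, u.2 (inl s) 1, 0]) fun t ↦ u.2 (inr t)
  map_add' u v := by ext (s | t) j <;> [fin_cases j <;> simp; rfl]
  map_smul' c u := by ext (s | t) j <;> [fin_cases j <;> simp; rfl]

/-- Degree one of the comparison map from the trimmed complex to the Gorenstein resolution. -/
def toGorenstein₁ : (ρ → R) × (σ ⊕ τ → Fin 3 → R) →ₗ[R] (ρ ⊕ σ) ⊕ (σ ⊕ τ) → R where
  toFun u := Sum.elim (Sum.elim u.1 fun s ↦ u.2 (inl s) 2) fun t ↦ x ⬝ᵥ koszulPart u t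
  map_add' u v := by ext ((p | s) | t) <;> simp [dotProduct_add]
  map_smul' c u := by ext ((p | s) | t) <;> simp

/-- Degree two of the comparison map from the trimmed complex to the Gorenstein resolution. -/
def toGorenstein₂ :
    (ρ → R) × (σ ⊕ τ → R) × (σ ⊕ τ → Fin 3 → R) →ₗ[R] (ρ ⊕ σ) ⊕ (σ ⊕ τ) → R where
  toFun z := Sum.elim (Sum.elim z.1 fun s ↦ -(x ⨯₃ z.2.2 (inl s)) 2) z.2.1
  map_add' z w := by ext ((p | s) | t) <;> simp [add_comm]
  map_smul' c z := by ext ((p | s) | t) <;> simp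

/-- The Koszul part of the second differential of the trimmed complex. -/
def koszulDiff : (ρ → R) × (σ ⊕ τ → R) × (σ ⊕ τ → Fin 3 → R) →ₗ[R] σ ⊕ τ → Fin 3 → R :=
  LinearMap.pi fun t ↦ (Ξ t).comp (toGorenstein₂ x) +
    (crossProduct x).comp
      ((LinearMap.proj t).comp ((LinearMap.snd R _ _).comp (LinearMap.snd R _ _)))

/-- The first differential of the trimmed complex. -/
def d₁ [Fintype ρ] [Fintype σ] [Fintype τ] : (ρ → R) × (σ ⊕ τ → Fin 3 → R) →ₗ[R] R :=
  (dotProductBilin R R g).comp (toGorenstein₁ x)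

/-- The second differential of the trimmed complex. -/
def d₂ : (ρ → R) × (σ ⊕ τ → R) × (σ ⊕ τ → Fin 3 → R) →ₗ[R] (ρ → R) × (σ ⊕ τ → Fin 3 → R) where
  toFun z := (fun p ↦ φ (toGorenstein₂ x z) (inl (inl p)),
    Sum.elim (fun s ↦ ![koszulDiff x Ξ z (inl s) 0, koszulDiff x Ξ z (inl s) 1,
      φ (toGorenstein₂ x z) (inl (inr s))]) fun t ↦ koszulDiff x Ξ z (inr t))
  map_add' z w := by
    ext1
    · ext; simp
    · ext (s | t) j <;> [fin_cases j <;> simp; simp]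
  map_smul' c z := by
    ext1
    · ext; simp
    · ext (s | t) j <;> [fin_cases j <;> simp; simp]

/-- The third differential of the trimmed complex. -/
def d₃ : R × (σ ⊕ τ → R) →ₗ[R] (ρ → R) × (σ ⊕ τ → R) × (σ ⊕ τ → Fin 3 → R) where
  toFun w := (fun p ↦ w.1 * g (inl (inl p)), fun t ↦ w.1 * g (inr t),
    fun t ↦ w.2 t • x - w.1 • q t)
  map_add' w w' := by
    ext <;> simp <;> ring
  map_smul' c w := by
    ext <;> simp <;> ring

@[simp]
theorem koszulDiff_apply (z : (ρ → R) × (σ ⊕ τ → R) × (σ ⊕ τ → Fin 3 → R)) (t : σ ⊕ τ) :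
    koszulDiff x Ξ z t = Ξ t (toGorenstein₂ x z) + x ⨯₃ z.2.2 t := rfl

variable {x g φ Ξ q}

theorem eq_of_toGorenstein₁_eq {u u' : (ρ → R) × (σ ⊕ τ → Fin 3 → R)}
    (h₁ : toGorenstein₁ x u = toGorenstein₁ x u') (h₂ : koszulPart u = koszulPart u') :
    u = u' := by
  refine Prod.ext (funext fun p ↦ congrFun h₁ (inl (inl p))) ?_
  ext (s | t) j
  · fin_cases j
    · exact congr($h₂ (inl s) 0)
    · exact congr($h₂ (inl s) 1)
    · exact congrFun h₁ (inl (inr s))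
  · exact congr($h₂ (inr t) j)

variable [Fintype ρ] [Fintype σ] [Fintype τ] (h : IsTrimming x g φ Ξ q)
include h

theorem koszulPart_d₂ (z : (ρ → R) × (σ ⊕ τ → R) × (σ ⊕ τ → Fin 3 → R)) :
    koszulPart (d₂ x φ Ξ z) = koszulDiff x Ξ z := by
  ext (s | t) j
  · fin_cases j <;> simp [koszulPart, d₂, h.lift_inl_two, toGorenstein₂]
  · rfl

theorem toGorenstein₁_d₂ (z : (ρ → R) × (σ ⊕ τ → R) × (σ ⊕ τ → Fin 3 → R)) :
    toGorenstein₁ x (d₂ x φ Ξ z) = φ (toGorenstein₂ x z) := by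
  ext ((p | s) | t)
  · rfl
  · rfl
  · change x ⬝ᵥ koszulPart (d₂ x φ Ξ z) t = _
    rw [koszulPart_d₂ h, koszulDiff_apply, dotProduct_add, dot_self_cross, add_zero,
      (h.lift t).dotProduct_map]

theorem toGorenstein₂_d₃ (w : R × (σ ⊕ τ → R)) :
    toGorenstein₂ x (d₃ x g q w) = w.1 • g := by
  ext ((p | s) | t)
  · rfl
  · change -(x ⨯₃ (w.2 (inl s) • x - w.1 • q (inl s))) 2 = _
    rw [map_sub, map_smul, map_smul, cross_self, (h.lift (inl s)).cross_eq]
    simp [h.lift_inl_two]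
  · rfl

theorem koszulDiff_d₃ (w : R × (σ ⊕ τ → R)) : koszulDiff x Ξ (d₃ x g q w) = 0 := by
  ext1 t
  change _ = (0 : Fin 3 → R)
  rw [koszulDiff_apply, toGorenstein₂_d₃ h]
  change _ + x ⨯₃ (w.2 t • x - w.1 • q t) = _
  rw [map_sub, map_smul, map_smul, map_smul, cross_self, (h.lift t).cross_eq]
  module

theorem ker_d₁ : LinearMap.ker (d₁ x g) = LinearMap.range (d₂ x φ Ξ) := by
  ext u
  refine ⟨fun hu ↦ ?_, ?_⟩
  · obtain ⟨v, hv⟩ := h.gorenstein.exists_map_eq (toGorenstein₁ x u) hu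
    have hy (t) : ∃ y, koszulPart u t - Ξ t v = x ⨯₃ y := by
      refine h.koszul.exists_eq_cross _ ?_
      rw [dotProduct_sub, (h.lift t).dotProduct_map, hv, sub_eq_zero]
      rfl
    choose y hy using hy
    let z : (ρ → R) × (σ ⊕ τ → R) × (σ ⊕ τ → Fin 3 → R) :=
      (fun p ↦ v (inl (inl p)), fun t ↦ v (inr t), y)
    have hz₂ : toGorenstein₂ x z = v := by
      ext ((p | s) | t)
      · rfl
      · change -(x ⨯₃ y (inl s)) 2 = _
        simp [← hy, h.lift_inl_two, koszulPart]
      · rfl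
    have hzK : koszulDiff x Ξ z = koszulPart u := by
      ext1 t
      rw [koszulDiff_apply, hz₂, ← hy, add_sub_cancel]
    exact ⟨z, eq_of_toGorenstein₁_eq (by rw [toGorenstein₁_d₂ h, hz₂, hv])
      (by rw [koszulPart_d₂ h, hzK])⟩
  · rintro ⟨z, rfl⟩
    change g ⬝ᵥ toGorenstein₁ x (d₂ x φ Ξ z) = 0
    rw [toGorenstein₁_d₂ h, h.gorenstein.dotProduct_map]

theorem ker_d₂ : LinearMap.ker (d₂ x φ Ξ) = LinearMap.range (d₃ x g q) := by
  ext z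
  refine ⟨fun hz ↦ ?_, ?_⟩
  · rw [LinearMap.mem_ker] at hz
    obtain ⟨c, hc⟩ := h.gorenstein.exists_eq_smul (toGorenstein₂ x z)
      (by rw [← toGorenstein₁_d₂ h, hz, map_zero])
    have hl (t) : ∃ l : R, z.2.2 t + c • q t = l • x := by
      refine h.koszul.exists_eq_smul _ ?_
      have : koszulDiff x Ξ z t = 0 := by rw [← koszulPart_d₂ h, hz, map_zero, Pi.zero_apply]
      rw [map_add, map_smul, (h.lift t).cross_eq, ← map_smul, ← hc, add_comm, ← this,
        koszulDiff_apply]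
    choose l hl using hl
    refine ⟨(c, l), Prod.ext ?_ (Prod.ext ?_ ?_)⟩
    · ext p
      exact (congrFun hc (inl (inl p))).symm
    · ext t
      exact (congrFun hc (inr t)).symm
    · ext1 t
      exact sub_eq_of_eq_add (hl t).symm
  · rintro ⟨w, rfl⟩
    refine eq_of_toGorenstein₁_eq (x := x) ?_ ?_
    · rw [toGorenstein₁_d₂ h, toGorenstein₂_d₃ h, map_smul, h.gorenstein.map_self, smul_zero,
        map_zero]
    · rw [koszulPart_d₂ h, koszulDiff_d₃ h, map_zero]

theorem ker_d₃ : LinearMap.ker (d₃ x g q) = ⊥ := by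
  rw [LinearMap.ker_eq_bot']
  intro w hw
  have h₁ : w.1 = 0 := h.gorenstein.eq_zero_of_smul_eq_zero _ <| by
    rw [← toGorenstein₂_d₃ h, hw, map_zero]
  refine Prod.ext h₁ (funext fun t ↦ h.koszul.eq_zero_of_smul_eq_zero _ ?_)
  have := congr($(hw).2.2 t)
  simpa [d₃, h₁] using this

theorem d₁_mem (u : (ρ → R) × (σ ⊕ τ → Fin 3 → R)) :
    d₁ x g u ∈ Ideal.span (Set.range x) * Ideal.span (Set.range x) :=
  dotProduct_mem_of_left h.gorenstein.mem_sq _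

theorem koszulDiff_mem (z : (ρ → R) × (σ ⊕ τ → R) × (σ ⊕ τ → Fin 3 → R)) (t : σ ⊕ τ) {j : Fin 3}
    (hj : j ≠ 2) : koszulDiff x Ξ z t j ∈ Ideal.span (Set.range x) := by
  rw [koszulDiff_apply]
  exact add_mem ((h.lift t).map_mem _ j hj) (cross_mem_of_left (mem_span_range_self x) _ _)

theorem koszulDiff_inr_mem (z : (ρ → R) × (σ ⊕ τ → R) × (σ ⊕ τ → Fin 3 → R)) (t : τ) (j : Fin 3) :
    koszulDiff x Ξ z (inr t) j ∈ Ideal.span (Set.range x) := by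
  obtain rfl | hj := eq_or_ne j 2
  · rw [koszulDiff_apply]
    exact add_mem (h.lift_inr_two_mem t _) (cross_mem_of_left (mem_span_range_self x) _ _)
  · exact koszulDiff_mem h z _ hj

theorem d₂_mem (z : (ρ → R) × (σ ⊕ τ → R) × (σ ⊕ τ → Fin 3 → R)) :
    d₂ x φ Ξ z ∈ Ideal.span (Set.range x) • (⊤ : Submodule R _) := by
  simp only [mem_smul_top_prod, mem_smul_top_pi, mem_smul_top_self]
  refine ⟨fun p ↦ h.gorenstein.map_mem _ _, ?_⟩
  rintro (s | t) j
  · fin_cases j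
    · exact koszulDiff_mem h z (inl s) (j := 0) (by decide)
    · exact koszulDiff_mem h z (inl s) (j := 1) (by decide)
    · exact h.gorenstein.map_mem _ _
  · exact koszulDiff_inr_mem h z t j

theorem d₃_mem (w : R × (σ ⊕ τ → R)) :
    d₃ x g q w ∈ Ideal.span (Set.range x) • (⊤ : Submodule R _) := by
  have hg i := Ideal.mul_le_right (h.gorenstein.mem_sq i)
  simp only [mem_smul_top_prod, mem_smul_top_pi, mem_smul_top_self]
  refine ⟨fun p ↦ Ideal.mul_mem_left _ _ (hg _), fun t ↦ Ideal.mul_mem_left _ _ (hg _),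
    fun t j ↦ sub_mem (Ideal.mul_mem_left _ _ (mem_span_range_self x j))
      (Ideal.mul_mem_left _ _ (Ideal.mul_le_right ((h.lift t).mem_sq j)))⟩

omit h [Fintype ρ] in
theorem exists_functional_apply_eq (hx : IsKoszulAcyclic x)
    {β : (ρ → R) × (σ ⊕ τ → R) × (σ ⊕ τ → Fin 3 → R) →ₗ[R] R} (hβ : ∀ w, β (d₃ x g q w) = 0) :
    ∃ μ : σ ⊕ τ → Fin 3 → R, ∀ z, β z = β (z.1, z.2.1, 0) + ∑ t, (x ⨯₃ μ t) ⬝ᵥ z.2.2 t := by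
  classical
  let β₃ (t : σ ⊕ τ) : (Fin 3 → R) →ₗ[R] R :=
    β.comp ((LinearMap.inr R _ _).comp
      ((LinearMap.inr R _ _).comp (LinearMap.single R (fun _ ↦ Fin 3 → R) t)))
  have hμ (t) : ∃ μ, (fun j ↦ β₃ t (Pi.single j 1)) = x ⨯₃ μ := by
    refine hx.exists_eq_cross _ ?_
    rw [← apply_eq_dotProduct_apply_single, ← hβ (0, Pi.single t 1)]
    refine congrArg β (Prod.ext ?_ (Prod.ext ?_ ?_))
    · simp [d₃, Pi.zero_def]
    · simp [d₃, Pi.zero_def]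
    · ext t' j
      obtain rfl | ht := eq_or_ne t' t <;> simp [d₃, *]
  choose μ hμ using hμ
  refine ⟨μ, fun z ↦ ?_⟩
  have hz : z = (z.1, z.2.1, 0) + ∑ t, (0, 0, Pi.single t (z.2.2 t)) := by
    refine Prod.ext ?_ (Prod.ext ?_ ?_) <;> simp [Prod.fst_sum, Prod.snd_sum, -Fintype.sum_sum_type,
      Finset.univ_sum_single]
  conv_lhs => rw [hz, map_add, map_sum]
  congr! 2 with t
  rw [← hμ, dotProduct_comm, ← apply_eq_dotProduct_apply_single]
  rfl

theorem functional_apply_add_sum_eq_zero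
    {β : (ρ → R) × (σ ⊕ τ → R) × (σ ⊕ τ → Fin 3 → R) →ₗ[R] R} (hβ : ∀ w, β (d₃ x g q w) = 0)
    {μ : σ ⊕ τ → Fin 3 → R} (hμ : ∀ z, β z = β (z.1, z.2.1, 0) + ∑ t, (x ⨯₃ μ t) ⬝ᵥ z.2.2 t) :
    β (fun p ↦ g (inl (inl p)), fun t ↦ g (inr t), 0) + ∑ t, μ t ⬝ᵥ Ξ t g = 0 := by
  have hq (t) : (x ⨯₃ μ t) ⬝ᵥ (d₃ x g q (1, 0)).2.2 t = μ t ⬝ᵥ Ξ t g := by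
    simp only [d₃, LinearMap.coe_mk, AddHom.coe_mk]
    rw [← (h.lift t).cross_eq, dotProduct_comm, triple_product_permutation,
      triple_product_permutation, ← cross_anticomm]
    simp
  have hz := (hμ (d₃ x g q (1, 0))).symm.trans (hβ _)
  simp only [hq] at hz
  simpa only [d₃, LinearMap.coe_mk, AddHom.coe_mk, one_mul] using hz

theorem functional_mem {β : (ρ → R) × (σ ⊕ τ → R) × (σ ⊕ τ → Fin 3 → R) →ₗ[R] R}
    (hβ : ∀ w, β (d₃ x g q w) = 0) (z : (ρ → R) × (σ ⊕ τ → R) × (σ ⊕ τ → Fin 3 → R)) :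
    β z ∈ Ideal.span (Set.range x) := by
  obtain ⟨μ, hμ⟩ := exists_functional_apply_eq h.koszul hβ
  let B : ((ρ ⊕ σ) ⊕ (σ ⊕ τ) → R) →ₗ[R] R := β.comp <|
    (LinearMap.funLeft R R (inl ∘ inl)).prod ((LinearMap.funLeft R R inr).prod 0)
  let η : ((ρ ⊕ σ) ⊕ (σ ⊕ τ) → R) →ₗ[R] R := ∑ t, (dotProductBilin R R (μ t)).comp (Ξ t)
  have hη (v) : η v = ∑ t, μ t ⬝ᵥ Ξ t v := by simp [η]
  have hg : (B + η) g = 0 := by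
    rw [LinearMap.add_apply, hη]
    exact functional_apply_add_sum_eq_zero h hβ hμ
  let v : (ρ ⊕ σ) ⊕ (σ ⊕ τ) → R := Sum.elim (Sum.elim z.1 0) z.2.1
  have hηv : η v ∈ Ideal.span (Set.range x) := by
    rw [hη]
    refine sum_mem fun t _ ↦ dotProduct_mem_of_right (fun j ↦ ?_) _
    obtain rfl | hj := eq_or_ne j 2
    · rcases t with s | t
      · simp [h.lift_inl_two, v]
      · exact h.lift_inr_two_mem t v
    · exact (h.lift t).map_mem v j hj
  have hBv : B v ∈ Ideal.span (Set.range x) :=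
    (add_mem_cancel_right hηv).1 (h.gorenstein.functional_mem hg v)
  rw [hμ]
  exact add_mem hBv <| sum_mem fun t _ ↦
    dotProduct_mem_of_left (cross_mem_of_left (mem_span_range_self x) _) _

section Products

variable {m₁₁ : (ρ → R) × (σ ⊕ τ → Fin 3 → R) →ₗ[R] (ρ → R) × (σ ⊕ τ → Fin 3 → R) →ₗ[R]
    (ρ → R) × (σ ⊕ τ → R) × (σ ⊕ τ → Fin 3 → R)}
  {m₁₂ : (ρ → R) × (σ ⊕ τ → Fin 3 → R) →ₗ[R] (ρ → R) × (σ ⊕ τ → R) × (σ ⊕ τ → Fin 3 → R) →ₗ[R]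
    R × (σ ⊕ τ → R)}
  (hm : IsDGProduct (d₁ x g) (d₂ x φ Ξ) (d₃ x g q) m₁₁ m₁₂)
include hm

theorem toGorenstein₂_mul_mem (a b : (ρ → R) × (σ ⊕ τ → Fin 3 → R)) (i) :
    toGorenstein₂ x (m₁₁ a b) i ∈ Ideal.span (Set.range x) := by
  have hd₁ (u) : d₁ x g u ∈ Ideal.span (Set.range g) :=
    dotProduct_mem_of_left (mem_span_range_self g) _
  refine h.gorenstein.mem_of_map_mem _ (fun i ↦ ?_) i
  rw [← toGorenstein₁_d₂ h, hm.leibniz₁₁, map_sub, map_smul, map_smul]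
  exact sub_mem (Ideal.mul_mem_right _ _ (hd₁ a)) (Ideal.mul_mem_right _ _ (hd₁ b))

theorem mul₁₁_snd_snd_mem (a b : (ρ → R) × (σ ⊕ τ → Fin 3 → R)) (t : σ ⊕ τ) (j : Fin 3) :
    (m₁₁ a b).2.2 t j ∈ Ideal.span (Set.range x) := by
  refine h.koszul.mem_of_cross_mem_sq (fun j hj ↦ ?_) j
  have hd : koszulDiff x Ξ (m₁₁ a b) t j ∈
      Ideal.span (Set.range x) * Ideal.span (Set.range x) := by
    rw [← koszulPart_d₂ h, hm.leibniz₁₁, map_sub, map_smul, map_smul]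
    exact sub_mem (Ideal.mul_mem_right _ _ (d₁_mem h a)) (Ideal.mul_mem_right _ _ (d₁_mem h b))
  have hΞ : Ξ t (toGorenstein₂ x (m₁₁ a b)) j ∈
      Ideal.span (Set.range x) * Ideal.span (Set.range x) :=
    map_mem_mul (f := (LinearMap.proj j).comp (Ξ t)) (fun v ↦ (h.lift t).map_mem v j hj)
      (mem_smul_top_pi_self.2 (toGorenstein₂_mul_mem h hm a b))
  rw [koszulDiff_apply, Pi.add_apply] at hd
  exact (add_mem_cancel_left hΞ).1 hd

theorem mul₁₁_mem (a b : (ρ → R) × (σ ⊕ τ → Fin 3 → R)) :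
    m₁₁ a b ∈ Ideal.span (Set.range x) • (⊤ : Submodule R _) := by
  have hz := toGorenstein₂_mul_mem h hm a b
  simp only [mem_smul_top_prod, mem_smul_top_pi, mem_smul_top_self]
  exact ⟨fun p ↦ hz (inl (inl p)), fun t ↦ hz (inr t), mul₁₁_snd_snd_mem h hm a b⟩

theorem mul₁₂_snd_mem (a : (ρ → R) × (σ ⊕ τ → Fin 3 → R))
    (z : (ρ → R) × (σ ⊕ τ → R) × (σ ⊕ τ → Fin 3 → R)) (t : σ ⊕ τ) :
    (m₁₂ a z).2 t ∈ Ideal.span (Set.range x) := by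
  have hx (j) : (m₁₂ a z).2 t * x j ∈ Ideal.span (Set.range x) * Ideal.span (Set.range x) := by
    have hprod : (m₁₁ a (d₂ x φ Ξ z)).2.2 t j ∈
        Ideal.span (Set.range x) * Ideal.span (Set.range x) :=
      map_mem_mul (f := (LinearMap.proj j).comp ((LinearMap.proj t).comp
          ((LinearMap.snd R _ _).comp ((LinearMap.snd R _ _).comp (m₁₁ a)))))
        (fun b ↦ mul₁₁_snd_snd_mem h hm a b t j) (d₂_mem h z)
    have hleib : (m₁₂ a z).2 t * x j - (m₁₂ a z).1 * q t j =
        d₁ x g a * z.2.2 t j - (m₁₁ a (d₂ x φ Ξ z)).2.2 t j :=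
      congr($(hm.leibniz₁₂ a z).2.2 t j)
    rw [eq_add_of_sub_eq hleib]
    exact add_mem (sub_mem (Ideal.mul_mem_right _ _ (d₁_mem h a)) hprod)
      (Ideal.mul_mem_left _ _ ((h.lift t).mem_sq j))
  have := h.koszul.mem_of_dotProduct_mem_sq (c := Pi.single 0 ((m₁₂ a z).2 t))
    (by simpa [mul_comm] using hx 0) 0
  simpa using this

theorem mul₁₂_fst_sub_mem (a : (ρ → R) × (σ ⊕ τ → Fin 3 → R))
    (z : (ρ → R) × (σ ⊕ τ → R) × (σ ⊕ τ → Fin 3 → R)) :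
    (m₁₂ a z).1 - a.1 ⬝ᵥ z.1 ∈ Ideal.span (Set.range x) := by
  let β : (ρ → R) × (σ ⊕ τ → R) × (σ ⊕ τ → Fin 3 → R) →ₗ[R] R :=
    (LinearMap.fst R _ _).comp (m₁₂ a) -
      (dotProductBilin R R (toGorenstein₁ x a)).comp (toGorenstein₂ x)
  have hβ (w) : β (d₃ x g q w) = 0 := by
    have hw : m₁₂ a (d₃ x g q w) = d₁ x g a • w := by
      refine LinearMap.ker_eq_bot.1 (ker_d₃ h) ?_
      have hd : d₂ x φ Ξ (d₃ x g q w) = 0 :=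
        LinearMap.mem_ker.1 (ker_d₂ h ▸ LinearMap.mem_range_self _ w)
      rw [hm.leibniz₁₂, map_smul, hd, map_zero, sub_zero]
    simp only [β, LinearMap.sub_apply, LinearMap.comp_apply, hw, toGorenstein₂_d₃ h]
    simp [d₁, dotProduct_comm, mul_comm]
  have hdot : toGorenstein₁ x a ⬝ᵥ toGorenstein₂ x z - a.1 ⬝ᵥ z.1 ∈ Ideal.span (Set.range x) := by
    have hs : ∑ s, a.2 (inl s) 2 * -(x ⨯₃ z.2.2 (inl s)) 2 ∈ Ideal.span (Set.range x) :=
      sum_mem fun s _ ↦ Ideal.mul_mem_left _ _ <| neg_mem <|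
        cross_mem_of_left (mem_span_range_self x) _ _
    have ht : ∑ t, x ⬝ᵥ koszulPart a t * z.2.1 t ∈ Ideal.span (Set.range x) :=
      sum_mem fun t _ ↦ Ideal.mul_mem_right _ _ <| dotProduct_mem_of_left (mem_span_range_self x) _
    convert add_mem hs ht using 1
    rw [sub_eq_iff_eq_add']
    simp only [dotProduct, Fintype.sum_sum_type (α₁ := ρ ⊕ σ), Fintype.sum_sum_type (α₁ := ρ)]
    exact add_assoc _ _ _
  simpa [β] using add_mem (functional_mem h hβ z) hdot

end Products

end Trimmed

end Trimming

section Acyclicity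

variable {R : Type*} [CommRing R] {x : Fin 3 → R}

theorem mem_of_span_pow_smul_mem {M : Type*} [AddCommGroup M] [Module R M] {S : Submodule R M}
    (hS : ∀ u, (∀ j, x j • u ∈ S) → u ∈ S) {v : M} :
    ∀ {n : ℕ}, (∀ a ∈ Ideal.span (Set.range x) ^ n, a • v ∈ S) → v ∈ S
  | 0, h => by simpa using h 1 (by simp)
  | n + 1, h => mem_of_span_pow_smul_mem hS fun a ha ↦ hS _ fun j ↦ by
      rw [smul_smul, mul_comm]
      exact h _ (Ideal.mul_mem_mul ha (mem_span_range_self x j))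

theorem mem_of_forall_smul_mem_of_mem_radical {M : Type*} [AddCommGroup M] [Module R M]
    {S : Submodule R M} (hS : ∀ u, (∀ j, x j • u ∈ S) → u ∈ S) {A : Ideal R}
    (hA : ∀ j, x j ∈ A.radical) {v : M} (hv : ∀ a ∈ A, a • v ∈ S) : v ∈ S := by
  obtain ⟨n, hn⟩ := Ideal.exists_pow_le_of_le_radical_of_fg
    (Ideal.span_le.2 (Set.range_subset_iff.2 hA)) (Submodule.fg_span (Set.finite_range x))
  exact mem_of_span_pow_smul_mem hS fun a ha ↦ hv a (hn ha)

namespace IsKoszulAcyclic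

variable {ι : Type*} {g : ι → R}

theorem eq_zero_of_smul_pi_eq_zero (hx : IsKoszulAcyclic x) {v : ι → R}
    (hv : ∀ j, x j • v = 0) : v = 0 :=
  funext fun i ↦ hx.eq_zero_of_smul_eq_zero _ <| funext fun j ↦ by
    simpa [mul_comm] using congrFun (hv j) i

theorem mem_span_singleton_of_smul_mem (hx : IsKoszulAcyclic x)
    (hg : ∀ c : R, c • g = 0 → c = 0) {v : ι → R}
    (hv : ∀ j, x j • v ∈ Submodule.span R {g}) : v ∈ Submodule.span R {g} := by
  simp only [Submodule.mem_span_singleton] at hv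
  choose β hβ using hv
  have hβ0 (i j) : x i * β j - x j * β i = 0 := hg _ <| by
    rw [sub_smul, mul_smul, mul_smul, hβ, hβ, smul_comm, sub_self]
  obtain ⟨l, rfl⟩ := hx.exists_eq_smul β (by simp [cross_apply, hβ0])
  refine Submodule.mem_span_singleton.2 ⟨l, (sub_eq_zero.1 ?_).symm⟩
  refine hx.eq_zero_of_smul_pi_eq_zero fun j ↦ ?_
  rw [smul_sub, ← hβ j, smul_smul, Pi.smul_apply, smul_eq_mul, mul_comm, sub_self]

theorem mem_range_of_smul_mem (hx : IsKoszulAcyclic x) (hg : ∀ c : R, c • g = 0 → c = 0)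
    {φ : (ι → R) →ₗ[R] ι → R} (hφ : ∀ v, φ v = 0 → ∃ c : R, v = c • g) (hφg : φ g = 0) {u : ι → R}
    (hu : ∀ j, x j • u ∈ LinearMap.range φ) : u ∈ LinearMap.range φ := by
  choose β hβ using hu
  have hρ (m) : ∃ c : R, (fun i ↦ (x ⨯₃ fun j ↦ β j i) m) = c • g := by
    refine hφ _ ?_
    have hβ0 (i j) : φ (x i • β j - x j • β i) = 0 := by
      rw [map_sub, map_smul, map_smul, hβ, hβ, smul_comm, sub_self]
    simp only [cross_apply]
    fin_cases m
    · exact hβ0 1 2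
    · exact hβ0 2 0
    · exact hβ0 0 1
  choose ρ hρ using hρ
  have hρ' (i) : x ⨯₃ (fun j ↦ β j i) = g i • ρ :=
    funext fun m ↦ (congrFun (hρ m) i).trans (mul_comm _ _)
  obtain ⟨μ, rfl⟩ := hx.exists_eq_cross ρ <| hg _ <| funext fun i ↦ by
    have := dot_self_cross x fun j ↦ β j i
    rwa [hρ', dotProduct_smul, smul_eq_mul, mul_comm] at this
  have hw (i) : ∃ w : R, (fun j ↦ β j i) - g i • μ = w • x :=
    hx.exists_eq_smul _ (by rw [map_sub, map_smul, hρ', sub_self])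
  choose w hw using hw
  refine ⟨w, (sub_eq_zero.1 <| hx.eq_zero_of_smul_pi_eq_zero fun j ↦ ?_).symm⟩
  have hβw : β j = μ j • g + x j • w := funext fun i ↦ by
    have := congrFun (hw i) j
    simp only [Pi.sub_apply, Pi.smul_apply, Pi.add_apply, smul_eq_mul] at this ⊢
    linear_combination this
  rw [smul_sub, ← hβ, hβw, map_add, map_smul, hφg, smul_zero, zero_add, map_smul, sub_self]

end IsKoszulAcyclic

end Acyclicity

section Continuant

variable {R : Type*} [CommRing R]

/-- The determinants of the tridiagonal matrices with diagonal `ζ 0, ζ 1, …` and with products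
`t` of opposite off-diagonal entries; `continuant ζ t (n + 1)` is the one of size `n`. -/
def continuant (ζ : ℕ → R) (t : R) : ℕ → R
  | 0 => 0
  | 1 => 1
  | n + 2 => ζ n * continuant ζ t (n + 1) - t * continuant ζ t n

theorem prod_sub_continuant_mem (ζ : ℕ → R) (t : R) (n : ℕ) :
    ∏ i ∈ Finset.range n, ζ i - continuant ζ t (n + 1) ∈ Ideal.span {t} := by
  induction n with
  | zero => simp [continuant]
  | succ n ih =>
    have hn : ∏ i ∈ Finset.range (n + 1), ζ i - continuant ζ t (n + 2) =
        ζ n * (∏ i ∈ Finset.range n, ζ i - continuant ζ t (n + 1)) + continuant ζ t n * t := by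
      rw [Finset.prod_range_succ, continuant]
      ring
    rw [hn]
    exact add_mem (Ideal.mul_mem_left _ _ ih)
      (Ideal.mul_mem_left _ _ (Ideal.mem_span_singleton_self t))

variable {N : Type*} [AddCommGroup N] [Module R N] {X Y : R} {ζ : ℕ → R} {k : ℕ}

theorem continuant_succ_smul_eq {P : ℕ → N} (h0 : P 0 = 0)
    (hP : ∀ i < k, ζ i • P (i + 1) = X • P (i + 2) + Y • P i) {i : ℕ} (hi : i ≤ k) :
    continuant ζ (X * Y) (i + 1) • P i = X • continuant ζ (X * Y) i • P (i + 1) := by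
  induction i with
  | zero => simp [continuant, h0]
  | succ i ih =>
    rw [continuant]
    linear_combination (norm := module) continuant ζ (X * Y) (i + 1) • hP i hi + Y • ih (by lia)

theorem continuant_add_smul_eq {P : ℕ → N} (h0 : P 0 = 0)
    (hP : ∀ i < k, ζ i • P (i + 1) = X • P (i + 2) + Y • P i) {i : ℕ} :
    ∀ {d}, i + d ≤ k + 1 →
      continuant ζ (X * Y) (i + d) • P i = X ^ d • continuant ζ (X * Y) i • P (i + d)
  | 0, _ => by simp
  | 1, hd => by simpa using continuant_succ_smul_eq h0 hP (by lia)
  | d + 2, hd => by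
    have h₁ := continuant_add_smul_eq h0 hP (i := i) (d := d) (by lia)
    have h₂ := continuant_add_smul_eq h0 hP (i := i) (d := d + 1) (by lia)
    have h₃ := hP (i + d) (by lia)
    rw [← add_assoc] at h₂ ⊢
    rw [continuant]
    linear_combination (norm := module) ζ (i + d) • h₂ - (X * Y) • h₁ +
      (X ^ (d + 1) * continuant ζ (X * Y) i) • h₃

end Continuant

section KernelSequence

variable {R N : Type*} [CommRing R] [AddCommGroup N] [Module R N] {X Y : R} {ζ : ℕ → R} {k : ℕ}

/-- Sequences supported on `[-k, k]` that are annihilated by the rows of `skewMatrix X Y ζ e`; the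
row listed under `c` is the one whose entry `± ζ` stands in column `c`. -/
structure IsKernelSequence (X Y : R) (ζ : ℕ → R) (k : ℕ) (F : ℤ → N) : Prop where
  row : ∀ c ≠ 0, c.natAbs ≤ k → X • F (c - 1) + Y • F (c + 1) = ζ (k - c.natAbs) • F c
  row_zero : X • F (-1) = Y • F 1
  eq_zero : ∀ c : ℤ, k < c.natAbs → F c = 0

/-- The submaximal Pfaffians, up to sign, of `skewMatrix X Y ζ e`. -/
def pfaffian (X Y : R) (ζ : ℕ → R) (k : ℕ) (c : ℤ) : R :=
  X ^ c.toNat * Y ^ (-c).toNat * continuant ζ (X * Y) (k + 1 - c.natAbs)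

theorem pfaffian_neg (X Y : R) (ζ : ℕ → R) (k : ℕ) (c : ℤ) :
    pfaffian X Y ζ k (-c) = pfaffian Y X ζ k c := by
  rw [pfaffian, pfaffian, neg_neg, Int.natAbs_neg, mul_comm X Y, mul_comm (X ^ _)]

theorem pfaffian_natCast (X Y : R) (ζ : ℕ → R) (k n : ℕ) :
    pfaffian X Y ζ k n = X ^ n * continuant ζ (X * Y) (k + 1 - n) := by
  simp [pfaffian]

theorem pfaffian_row (X Y : R) (ζ : ℕ → R) {k n : ℕ} (hn : n < k) :
    X * pfaffian X Y ζ k n + Y * pfaffian X Y ζ k (n + 2 : ℕ) =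
      ζ (k - (n + 1)) * pfaffian X Y ζ k (n + 1 : ℕ) := by
  obtain ⟨i, rfl⟩ := Nat.exists_eq_add_of_lt hn
  simp only [pfaffian_natCast, show n + i + 1 + 1 - n = i + 2 by lia,
    show n + i + 1 + 1 - (n + 2) = i by lia, show n + i + 1 + 1 - (n + 1) = i + 1 by lia,
    show n + i + 1 - (n + 1) = i by lia, continuant]
  ring

theorem isKernelSequence_pfaffian (X Y : R) (ζ : ℕ → R) (k : ℕ) :
    IsKernelSequence X Y ζ k (pfaffian X Y ζ k) where
  row c hc hck := by
    obtain ⟨n, rfl | rfl⟩ := c.eq_nat_or_neg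
    all_goals obtain ⟨n, rfl⟩ := Nat.exists_eq_succ_of_ne_zero (n := n) (by lia)
    all_goals simp only [Int.natAbs_neg, Int.natAbs_natCast, smul_eq_mul] at hck ⊢
    · rw [show ((n + 1 : ℕ) : ℤ) - 1 = n by lia, show ((n + 1 : ℕ) : ℤ) + 1 = (n + 2 : ℕ) by lia]
      exact pfaffian_row X Y ζ hck
    · rw [show -((n + 1 : ℕ) : ℤ) - 1 = -(n + 2 : ℕ) by lia,
        show -((n + 1 : ℕ) : ℤ) + 1 = -n by lia, add_comm]
      simpa only [pfaffian_neg] using pfaffian_row Y X ζ hck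
  row_zero := by
    simp [pfaffian, mul_left_comm]
  eq_zero c hc := by
    rw [pfaffian, Nat.sub_eq_zero_of_le (by lia), continuant, mul_zero]

namespace IsKernelSequence

variable {F : ℤ → N} (hF : IsKernelSequence X Y ζ k F)
include hF

theorem neg : IsKernelSequence Y X ζ k fun c ↦ F (-c) where
  row c hc hck := by
    have := hF.row (-c) (by lia) (by lia)
    rwa [Int.natAbs_neg, show -c - 1 = -(c + 1) by ring, show -c + 1 = -(c - 1) by ring,
      add_comm] at this
  row_zero := by simpa using hF.row_zero.symm
  eq_zero c hc := hF.eq_zero _ (by lia)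

theorem row_natCast {n : ℕ} (hn : n < k) :
    X • F n + Y • F (n + 2 : ℕ) = ζ (k - (n + 1)) • F (n + 1 : ℕ) := by
  have := hF.row (n + 1 : ℕ) (by lia) (by lia)
  rwa [show ((n + 1 : ℕ) : ℤ) - 1 = n by lia, show ((n + 1 : ℕ) : ℤ) + 1 = (n + 2 : ℕ) by lia]
    at this

theorem continuant_add_smul_eq {i d : ℕ} (hd : i + d ≤ k + 1) :
    continuant ζ (X * Y) (i + d) • F (k + 1 - i : ℕ) =
      X ^ d • continuant ζ (X * Y) i • F (k + 1 - (i + d) : ℕ) := by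
  refine TorClassG.continuant_add_smul_eq (P := fun i ↦ F (k + 1 - i : ℕ))
    (hF.eq_zero _ (by lia)) (fun i hi ↦ ?_) hd
  obtain ⟨n, rfl⟩ := Nat.exists_eq_add_of_lt hi
  simpa [show i + n + 1 + 1 - i = n + 2 by lia, show i + n + 1 + 1 - (i + 1) = n + 1 by lia,
    show i + n + 1 + 1 - (i + 2) = n by lia, show i + n + 1 - (n + 1) = i by lia] using
    (hF.row_natCast (n := n) (by lia)).symm

theorem pow_smul_neg_eq {n : ℕ} (hn : n ≤ k + 1) : X ^ n • F (-n) = Y ^ n • F n := by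
  induction n using Nat.twoStepInduction with
  | zero => simp
  | one => simpa using hF.row_zero
  | more n h₁ h₂ =>
    have hr := hF.row_natCast (n := n) (by lia)
    have hr' := hF.neg.row_natCast (n := n) (by lia)
    linear_combination (norm := module) X ^ (n + 1) • hr' - Y ^ (n + 1) • hr +
      ζ (k - (n + 1)) • h₂ (by lia) - (X * Y) • h₁ (by lia)

theorem continuant_smul_natCast {m n : ℕ} (hmn : m ≤ n) (hn : n ≤ k) :
    continuant ζ (X * Y) (k + 1 - m) • F n =
      X ^ (n - m) • continuant ζ (X * Y) (k + 1 - n) • F m := by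
  have := hF.continuant_add_smul_eq (i := k + 1 - n) (d := n - m) (by lia)
  rwa [show k + 1 - n + (n - m) = k + 1 - m by lia, show k + 1 - (k + 1 - n) = n by lia,
    show k + 1 - (k + 1 - m) = m by lia] at this

theorem pfaffian_smul_of_natAbs_le {p : ℤ} {n : ℕ} (hpn : p.natAbs ≤ n) (hn : n ≤ k) :
    pfaffian X Y ζ k p • F n = pfaffian X Y ζ k n • F p := by
  obtain ⟨m, rfl | rfl⟩ := p.eq_nat_or_neg
  all_goals simp only [Int.natAbs_neg, Int.natAbs_natCast] at hpn
  · rw [pfaffian_natCast, pfaffian_natCast, mul_smul, hF.continuant_smul_natCast hpn hn, smul_smul,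
      ← pow_add, Nat.add_sub_cancel' hpn, mul_smul]
  · rw [pfaffian_neg, pfaffian_natCast, pfaffian_natCast, mul_comm Y, mul_smul,
      hF.continuant_smul_natCast hpn hn, smul_comm, smul_comm (Y ^ m),
      ← hF.pow_smul_neg_eq (by lia), smul_comm _ (X ^ m), smul_smul, ← pow_add,
      Nat.sub_add_cancel hpn, mul_smul]

theorem pfaffian_smul_comm {p c : ℤ} (hp : p.natAbs ≤ k) (hc : c.natAbs ≤ k) :
    pfaffian X Y ζ k p • F c = pfaffian X Y ζ k c • F p := by
  wlog hpc : p.natAbs ≤ c.natAbs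
  · exact (this hF hc hp (by lia)).symm
  obtain ⟨n, rfl | rfl⟩ := c.eq_nat_or_neg
  · exact hF.pfaffian_smul_of_natAbs_le hpc (by lia)
  · have := hF.neg.pfaffian_smul_of_natAbs_le (p := -p) (n := n) (by lia) (by lia)
    rwa [neg_neg, pfaffian_neg, ← pfaffian_neg X] at this

end IsKernelSequence

theorem mem_radical_span_pfaffian {X Y : R} {ζ : ℕ → R} {k : ℕ} {A : Ideal R}
    (hk : pfaffian X Y ζ k k ∈ A) (hk' : pfaffian X Y ζ k (-k) ∈ A) (h0 : pfaffian X Y ζ k 0 ∈ A) :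
    X ∈ A.radical ∧ Y ∈ A.radical ∧ ∏ i ∈ Finset.range k, ζ i ∈ A.radical := by
  have hX : X ∈ A.radical := ⟨k, by simpa [pfaffian, continuant] using hk⟩
  have hY : Y ∈ A.radical := ⟨k, by simpa [pfaffian, continuant] using hk'⟩
  refine ⟨hX, hY, ?_⟩
  rw [← Submodule.sub_mem_iff_left _ (A.le_radical h0)]
  have := prod_sub_continuant_mem ζ (X * Y) k
  refine (Ideal.span_singleton_le_iff_mem _).2 (Ideal.mul_mem_right Y _ hX) ?_
  simpa [pfaffian] using this

end KernelSequence

section SkewMatrix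

variable {R N ι : Type*} [CommRing R] [AddCommGroup N] [Module R N] {k : ℕ}

theorem isUnit_intCast_sign {c : ℤ} (hc : c ≠ 0) : IsUnit (Int.sign c : R) := by
  obtain hc | hc := hc.lt_or_gt
  · simp [Int.sign_eq_neg_one_of_neg hc]
  · simp [Int.sign_eq_one_of_pos hc]

/-- The extension by zero to `ℤ` of a family whose index set is identified with `[-k, k]`. -/
noncomputable def extendZero (e : ι ≃ Set.Icc (-(k : ℤ)) k) (f : ι → N) : ℤ → N :=
  Function.extend (fun i ↦ (e i : ℤ)) f 0

theorem extendZero_apply (e : ι ≃ Set.Icc (-(k : ℤ)) k) (f : ι → N) (i : ι) :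
    extendZero e f (e i) = f i :=
  (Subtype.val_injective.comp e.injective).extend_apply f 0 i

theorem extendZero_of_lt (e : ι ≃ Set.Icc (-(k : ℤ)) k) (f : ι → N) {c : ℤ} (hc : k < c.natAbs) :
    extendZero e f c = 0 :=
  Function.extend_apply' _ _ _ fun ⟨i, hi⟩ ↦ by
    have := (e i).2
    simp only [Set.mem_Icc, hi] at this
    lia

/-- The alternating matrix of size `2k + 1` whose rows and columns are listed by `[-k, k]`, with
entries `± ζ` on the antidiagonal and `± X`, `± Y` next to it. -/
def skewMatrix (X Y : R) (ζ : ℕ → R) (e : ι ≃ Set.Icc (-(k : ℤ)) k) : Matrix ι ι R :=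
  Matrix.of fun i j ↦ (Int.sign (e j - e i) : R) *
    ((if (e i + e j : ℤ) = -1 then X else 0) + (if (e i + e j : ℤ) = 1 then Y else 0) -
      if (e i + e j : ℤ) = 0 then ζ (k - (e i : ℤ).natAbs) else 0)

variable (X Y : R) (ζ : ℕ → R) (e : ι ≃ Set.Icc (-(k : ℤ)) k)

theorem skewMatrix_transpose : (skewMatrix X Y ζ e)ᵀ = -skewMatrix X Y ζ e := by
  ext i j
  have hs : Int.sign (e i - e j) = -Int.sign (e j - e i) := by rw [← Int.sign_neg, neg_sub]
  have hζ : (if (e j + e i : ℤ) = 0 then ζ (k - (e j : ℤ).natAbs) else 0) =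
      if (e i + e j : ℤ) = 0 then ζ (k - (e i : ℤ).natAbs) else 0 := by
    rw [add_comm]
    split_ifs with h
    · rw [eq_neg_of_add_eq_zero_left h, Int.natAbs_neg]
    · rfl
  simp only [skewMatrix, transpose_apply, of_apply, Matrix.neg_apply]
  rw [hζ, hs, add_comm (e j : ℤ)]
  push_cast
  ring

variable [Fintype ι] {X Y ζ e}

theorem sum_ite_smul_eq (f : ι → N) (r : R) (c : ℤ) :
    ∑ j, (if (e j : ℤ) = c then r else 0) • f j = r • extendZero e f c := by
  classical
  by_cases hc : c ∈ Set.Icc (-(k : ℤ)) k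
  · obtain ⟨i, hi⟩ := e.surjective ⟨c, hc⟩
    obtain rfl : (e i : ℤ) = c := by rw [hi]
    simp [extendZero_apply, Subtype.coe_inj]
  · have hj (j) : (e j : ℤ) ≠ c := fun h ↦ hc (h ▸ (e j).2)
    rw [extendZero_of_lt e f (by simp only [Set.mem_Icc] at hc; lia)]
    simp [hj]

theorem sum_skewMatrix_smul (f : ι → N) {i : ι} {c : ℤ} (hi : (e i : ℤ) = -c) :
    ∑ j, skewMatrix X Y ζ e i j • f j =
      (Int.sign (2 * c - 1) : R) • X • extendZero e f (c - 1) +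
        (Int.sign (2 * c + 1) : R) • Y • extendZero e f (c + 1) -
        (Int.sign (2 * c) : R) • ζ (k - c.natAbs) • extendZero e f c := by
  simp only [smul_smul]
  rw [← sum_ite_smul_eq, ← sum_ite_smul_eq, ← sum_ite_smul_eq, ← Finset.sum_add_distrib,
    ← Finset.sum_sub_distrib]
  refine Finset.sum_congr rfl fun j _ ↦ ?_
  rw [← add_smul, ← sub_smul, skewMatrix, of_apply, hi, Int.natAbs_neg]
  congr 1
  have h₁ : -c + e j = -1 ↔ (e j : ℤ) = c - 1 := by lia
  have h₂ : -c + e j = 1 ↔ (e j : ℤ) = c + 1 := by lia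
  have h₃ : -c + e j = 0 ↔ (e j : ℤ) = c := by lia
  simp only [h₁, h₂, h₃, sub_neg_eq_add, mul_sub, mul_add, mul_ite, mul_zero]
  refine congr_arg₂ _ (congr_arg₂ _ ?_ ?_) ?_ <;>
    refine ite_congr rfl (fun hj ↦ ?_) fun _ ↦ rfl <;> rw [hj] <;> ring_nf

theorem sum_skewMatrix_smul_of_ne_zero (f : ι → N) {i : ι} {c : ℤ} (hi : (e i : ℤ) = -c)
    (hc : c ≠ 0) :
    ∑ j, skewMatrix X Y ζ e i j • f j =
      (Int.sign c : R) • (X • extendZero e f (c - 1) + Y • extendZero e f (c + 1) -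
        ζ (k - c.natAbs) • extendZero e f c) := by
  have hs : Int.sign (2 * c - 1) = Int.sign c ∧ Int.sign (2 * c + 1) = Int.sign c := by
    obtain hc | hc := hc.lt_or_gt
    · simp [Int.sign_eq_neg_one_of_neg hc, Int.sign_eq_neg_one_iff_neg, show 2 * c < 1 by lia,
        show 2 * c + 1 < 0 by lia]
    · simp [Int.sign_eq_one_of_pos hc, Int.sign_eq_one_iff_pos, show 1 < 2 * c by lia,
        show 0 < 2 * c + 1 by lia]
  rw [sum_skewMatrix_smul f hi, hs.1, hs.2, Int.sign_mul, show Int.sign 2 = 1 from rfl, one_mul,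
    ← smul_add, ← smul_sub]

theorem isKernelSequence_extendZero_iff {f : ι → N} :
    IsKernelSequence X Y ζ k (extendZero e f) ↔ ∀ i, ∑ j, skewMatrix X Y ζ e i j • f j = 0 := by
  refine ⟨fun h i ↦ ?_, fun h ↦ ⟨fun c hc hck ↦ ?_, ?_, fun c ↦ extendZero_of_lt e f⟩⟩
  · obtain hi | hi := eq_or_ne (e i : ℤ) 0
    · rw [sum_skewMatrix_smul f (hi.trans neg_zero.symm)]
      simp [h.row_zero]
    · have hi' := (e i).2
      rw [sum_skewMatrix_smul_of_ne_zero f (neg_neg _).symm (neg_ne_zero.2 hi),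
        h.row _ (neg_ne_zero.2 hi) (by simp only [Set.mem_Icc] at hi'; lia), sub_self, smul_zero]
  · obtain ⟨i, hi⟩ := e.surjective ⟨-c, by simp only [Set.mem_Icc]; lia⟩
    have h₀ := h i
    rw [sum_skewMatrix_smul_of_ne_zero f (c := c) (by rw [hi]) hc] at h₀
    exact sub_eq_zero.1 ((isUnit_intCast_sign hc).smul_eq_zero.1 h₀)
  · obtain ⟨i, hi⟩ := e.surjective ⟨0, by simp⟩
    have h₀ := h i
    rw [sum_skewMatrix_smul f (c := 0) (by rw [hi, neg_zero])] at h₀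
    simpa [neg_add_eq_zero] using h₀

end SkewMatrix

section PfaffianResolution

variable {R N ι : Type*} [CommRing R] [AddCommGroup N] [Module R N] {k : ℕ} {X Y : R}
  {ζ : ℕ → R} {e : ι ≃ Set.Icc (-(k : ℤ)) k}

theorem extendZero_pfaffian (X Y : R) (ζ : ℕ → R) (e : ι ≃ Set.Icc (-(k : ℤ)) k) :
    extendZero e (fun i ↦ pfaffian X Y ζ k (e i)) = pfaffian X Y ζ k := by
  funext c
  by_cases hc : k < c.natAbs
  · rw [extendZero_of_lt e _ hc, (isKernelSequence_pfaffian X Y ζ k).eq_zero c hc]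
  · obtain ⟨i, hi⟩ := e.surjective ⟨c, by simp only [Set.mem_Icc]; lia⟩
    obtain rfl : (e i : ℤ) = c := by rw [hi]
    exact extendZero_apply e _ i

theorem eq_zero_of_smul_pfaffian_eq_zero {x : Fin 3 → R} (hx : IsKoszulAcyclic x)
    (hrad : ∀ j, x j ∈ (Ideal.span (Set.range fun i ↦ pfaffian X Y ζ k (e i))).radical)
    {c : R} (hc : c • (fun i ↦ pfaffian X Y ζ k (e i)) = 0) : c = 0 := by
  have hker : Ideal.span (Set.range fun i ↦ pfaffian X Y ζ k (e i)) ≤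
      LinearMap.ker (LinearMap.toSpanSingleton R R c) := by
    refine Ideal.span_le.2 (Set.range_subset_iff.2 fun i ↦ ?_)
    simpa [mul_comm] using congrFun hc i
  refine (Submodule.mem_bot R).1 <| mem_of_forall_smul_mem_of_mem_radical (S := ⊥)
    (fun u hu ↦ hx.eq_zero_of_smul_eq_zero u <| funext fun j ↦ ?_) hrad fun b hb ↦ hker hb
  simpa [mul_comm] using hu j

variable [Fintype ι]

theorem skewMatrix_mulVec_pfaffian (X Y : R) (ζ : ℕ → R) (e : ι ≃ Set.Icc (-(k : ℤ)) k) :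
    skewMatrix X Y ζ e *ᵥ (fun i ↦ pfaffian X Y ζ k (e i)) = 0 :=
  funext <| isKernelSequence_extendZero_iff.1 <|
    (extendZero_pfaffian X Y ζ e).symm ▸ isKernelSequence_pfaffian X Y ζ k

theorem pfaffian_dotProduct_skewMatrix_mulVec (v : ι → R) :
    (fun i ↦ pfaffian X Y ζ k (e i)) ⬝ᵥ skewMatrix X Y ζ e *ᵥ v = 0 := by
  rw [dotProduct_mulVec, ← mulVec_transpose, skewMatrix_transpose, neg_mulVec,
    skewMatrix_mulVec_pfaffian, neg_zero, zero_dotProduct]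

theorem exists_smul_eq_pfaffian_smul {f : ι → N}
    (hf : ∀ i, ∑ j, skewMatrix X Y ζ e i j • f j = 0) {b : R}
    (hb : b ∈ Ideal.span (Set.range fun i ↦ pfaffian X Y ζ k (e i))) :
    ∃ n : N, ∀ i, b • f i = pfaffian X Y ζ k (e i) • n := by
  induction hb using Submodule.span_induction with
  | mem b hb =>
    obtain ⟨p, rfl⟩ := hb
    have hF := isKernelSequence_extendZero_iff.2 hf
    have he (i) : (e i : ℤ).natAbs ≤ k := by
      have := (e i).2
      simp only [Set.mem_Icc] at this
      lia
    exact ⟨f p, fun i ↦ by simpa [extendZero_apply] using hF.pfaffian_smul_comm (he p) (he i)⟩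
  | zero => exact ⟨0, by simp⟩
  | add b c _ _ hb hc =>
    obtain ⟨n, hn⟩ := hb
    obtain ⟨n', hn'⟩ := hc
    exact ⟨n + n', fun i ↦ by rw [add_smul, hn, hn', smul_add]⟩
  | smul r b _ hb =>
    obtain ⟨n, hn⟩ := hb
    exact ⟨r • n, fun i ↦ by rw [smul_assoc, hn, smul_comm]⟩

variable {x : Fin 3 → R} (hx : IsKoszulAcyclic x)
  (hrad : ∀ j, x j ∈ (Ideal.span (Set.range fun i ↦ pfaffian X Y ζ k (e i))).radical)
include hx hrad

theorem exists_eq_smul_pfaffian {v : ι → R} (hv : skewMatrix X Y ζ e *ᵥ v = 0) :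
    ∃ c : R, v = c • fun i ↦ pfaffian X Y ζ k (e i) := by
  suffices v ∈ Submodule.span R {fun i ↦ pfaffian X Y ζ k (e i)} by
    obtain ⟨c, hc⟩ := Submodule.mem_span_singleton.1 this
    exact ⟨c, hc.symm⟩
  refine mem_of_forall_smul_mem_of_mem_radical (fun u hu ↦ hx.mem_span_singleton_of_smul_mem
    (fun c ↦ eq_zero_of_smul_pfaffian_eq_zero hx hrad) hu) hrad fun b hb ↦ ?_
  obtain ⟨n, hn⟩ := exists_smul_eq_pfaffian_smul (congrFun hv) hb
  exact Submodule.mem_span_singleton.2 ⟨n, funext fun i ↦ (mul_comm _ _).trans (hn i).symm⟩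

theorem exists_skewMatrix_mulVec_eq {u : ι → R}
    (hu : (fun i ↦ pfaffian X Y ζ k (e i)) ⬝ᵥ u = 0) : ∃ v, skewMatrix X Y ζ e *ᵥ v = u := by
  classical
  set φ := (skewMatrix X Y ζ e).mulVecLin
  change u ∈ LinearMap.range φ
  refine mem_of_forall_smul_mem_of_mem_radical (fun w hw ↦ hx.mem_range_of_smul_mem
    (fun c ↦ eq_zero_of_smul_pfaffian_eq_zero hx hrad) (fun v ↦ exists_eq_smul_pfaffian hx hrad)
    (skewMatrix_mulVec_pfaffian X Y ζ e) hw) hrad fun b hb ↦ ?_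
  have hf (i) : ∑ j, skewMatrix X Y ζ e i j • (LinearMap.range φ).mkQ (Pi.single j 1) = 0 := by
    simp_rw [← map_smul, ← map_sum]
    refine (Submodule.Quotient.mk_eq_zero _).2 ⟨-Pi.single i 1, ?_⟩
    rw [map_neg, mulVecLin_apply, mulVec_single_one]
    funext l
    have hl := congr($(skewMatrix_transpose X Y ζ e) i l)
    simpa [Finset.sum_apply, Pi.single_apply, neg_eq_iff_eq_neg] using hl
  obtain ⟨n, hn⟩ := exists_smul_eq_pfaffian_smul hf hb
  have hbu : (LinearMap.range φ).mkQ (b • u) = ((fun i ↦ pfaffian X Y ζ k (e i)) ⬝ᵥ u) • n := by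
    have hsum : u = ∑ i, u i • Pi.single i 1 := by
      simp only [← Pi.single_smul, smul_eq_mul, mul_one, Finset.univ_sum_single]
    rw [dotProduct, Finset.sum_smul, map_smul, hsum, map_sum, Finset.smul_sum, ← hsum]
    refine Finset.sum_congr rfl fun i _ ↦ ?_
    rw [map_smul, smul_comm, hn, smul_smul, mul_comm]
  rwa [hu, zero_smul, Submodule.mkQ_apply, Submodule.Quotient.mk_eq_zero] at hbu

end PfaffianResolution

section PfaffianIdeal

variable {R ι : Type*} [CommRing R] {k : ℕ}

theorem continuant_succ_mem {J : Ideal R} {ζ : ℕ → R} {t : R} (ht : t ∈ J) {n : ℕ}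
    (hζ : ∏ i ∈ Finset.range n, ζ i ∈ J) : continuant ζ t (n + 1) ∈ J :=
  (J.sub_mem_iff_right hζ).1 <|
    (Ideal.span_singleton_le_iff_mem _).2 ht (prod_sub_continuant_mem ζ t n)

theorem pfaffian_natCast_mem {I Q : Ideal R} {X Y : R} {ζ : ℕ → R} (hXI : X ∈ I) (hXQ : X ∈ Q)
    (hYQ : Y ∈ Q) (hζI : ζ 0 ∈ I) (hζQ : ∀ i ≠ 0, ζ i ∈ Q) (hk : 2 ≤ k) (n : ℕ) :
    pfaffian X Y ζ k n ∈ I * Q := by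
  have hprod (m : ℕ) : ∏ i ∈ Finset.range (m + 1), ζ i ∈ I := by
    rw [Finset.prod_range_succ']
    exact I.mul_mem_left _ hζI
  obtain ⟨l, rfl⟩ := Nat.exists_eq_add_of_le' hk
  rw [pfaffian_natCast]
  obtain _ | _ | n := n
  · rw [pow_zero, one_mul]
    refine continuant_succ_mem (Ideal.mul_mem_mul hXI hYQ) ?_
    rw [Finset.prod_range_succ]
    exact Ideal.mul_mem_mul (hprod l) (hζQ _ (by lia))
  · rw [zero_add, pow_one, mul_comm X]
    exact Ideal.mul_mem_mul (continuant_succ_mem (I.mul_mem_right Y hXI) (hprod l)) hXQ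
  · rw [show X ^ (n + 1 + 1) = X ^ n * (X * X) by ring]
    exact Ideal.mul_mem_right _ _ (Ideal.mul_mem_left _ _ (Ideal.mul_mem_mul hXI hXQ))

/-- The generators of the Gorenstein ideal that gets trimmed: the submaximal Pfaffians of
`gorensteinMap x a e`. -/
def gorensteinGens (x : Fin 3 → R) (a : ℕ → ℕ) (e : ι ≃ Set.Icc (-(k : ℤ)) k) : ι → R :=
  fun i ↦ pfaffian (x 0 ^ 2) (x 1 ^ 2) (fun i ↦ x 2 ^ (a i + 1)) k (e i)

/-- The alternating map that presents the Gorenstein ideal generated by `gorensteinGens x a e`. -/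
def gorensteinMap [Fintype ι] (x : Fin 3 → R) (a : ℕ → ℕ) (e : ι ≃ Set.Icc (-(k : ℤ)) k) :
    (ι → R) →ₗ[R] ι → R :=
  (skewMatrix (x 0 ^ 2) (x 1 ^ 2) (fun i ↦ x 2 ^ (a i + 1)) e).mulVecLin

variable {x : Fin 3 → R} {a : ℕ → ℕ} {e : ι ≃ Set.Icc (-(k : ℤ)) k}

theorem mem_radical_span_gorensteinGens (x : Fin 3 → R) (a : ℕ → ℕ)
    (e : ι ≃ Set.Icc (-(k : ℤ)) k) (j : Fin 3) :
    x j ∈ (Ideal.span (Set.range (gorensteinGens x a e))).radical := by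
  have hmem (c : ℤ) (hc : c ∈ Set.Icc (-(k : ℤ)) k) :
      pfaffian (x 0 ^ 2) (x 1 ^ 2) (fun i ↦ x 2 ^ (a i + 1)) k c ∈
        Ideal.span (Set.range (gorensteinGens x a e)) :=
    Ideal.subset_span ⟨e.symm ⟨c, hc⟩, by simp [gorensteinGens]⟩
  obtain ⟨h₀, h₁, h₂⟩ := mem_radical_span_pfaffian (hmem k (by simp)) (hmem (-k) (by simp))
    (hmem 0 (by simp))
  rw [Finset.prod_pow_eq_pow_sum] at h₂
  have hpow {y : R} {n : ℕ} := Ideal.mem_radical_of_pow_mem (I := Ideal.span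
    (Set.range (gorensteinGens x a e))) (x := y) (m := n)
  fin_cases j
  exacts [hpow h₀, hpow h₁, hpow h₂]

theorem sq_mem_span_sq (x : Fin 3 → R) (j : Fin 3) :
    x j ^ 2 ∈ Ideal.span (Set.range fun j ↦ x j ^ 2) :=
  mem_span_range_self (fun j ↦ x j ^ 2) j

theorem pow_mem_span (x : Fin 3 → R) (j : Fin 3) {n : ℕ} (hn : n ≠ 0) :
    x j ^ n ∈ Ideal.span (Set.range x) :=
  Ideal.pow_mem_of_mem _ (mem_span_range_self x j) n (Nat.pos_of_ne_zero hn)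

theorem gorensteinGens_mem (hk : 2 ≤ k) (ha : ∀ i ≠ 0, 1 ≤ a i) (i : ι) :
    gorensteinGens x a e i ∈
      Ideal.span (Set.range x) * Ideal.span (Set.range fun j ↦ x j ^ 2) := by
  have hζQ (i : ℕ) (hi : i ≠ 0) : x 2 ^ (a i + 1) ∈ Ideal.span (Set.range fun j ↦ x j ^ 2) := by
    rw [← Nat.sub_add_cancel (ha i hi), add_assoc, pow_add]
    exact Ideal.mul_mem_left _ _ (sq_mem_span_sq x 2)
  rw [gorensteinGens]
  obtain ⟨n, hn | hn⟩ := (e i : ℤ).eq_nat_or_neg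
  · rw [hn]
    exact pfaffian_natCast_mem (ζ := fun i ↦ x 2 ^ (a i + 1)) (pow_mem_span x 0 two_ne_zero)
      (sq_mem_span_sq x 0) (sq_mem_span_sq x 1) (pow_mem_span x 2 (a 0).succ_ne_zero) hζQ hk n
  · rw [hn, pfaffian_neg]
    exact pfaffian_natCast_mem (ζ := fun i ↦ x 2 ^ (a i + 1)) (pow_mem_span x 1 two_ne_zero)
      (sq_mem_span_sq x 1) (sq_mem_span_sq x 0) (pow_mem_span x 2 (a 0).succ_ne_zero) hζQ hk n

variable [Fintype ι]

theorem gorensteinMap_mem (v : ι → R) (i : ι) :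
    gorensteinMap x a e v i ∈ Ideal.span (Set.range x) := by
  refine dotProduct_mem_of_left (fun j ↦ Ideal.mul_mem_left _ _ ?_) v
  refine sub_mem (add_mem ?_ ?_) ?_ <;> split_ifs
  exacts [pow_mem_span x 0 two_ne_zero, zero_mem _, pow_mem_span x 1 two_ne_zero, zero_mem _,
    pow_mem_span x 2 (by lia), zero_mem _]

theorem gorensteinMap_apply (v : ι → R) {i : ι} {c : ℤ} (hi : (e i : ℤ) = -c) :
    gorensteinMap x a e v i = Int.sign (2 * c - 1) * (x 0 ^ 2 * extendZero e v (c - 1)) +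
      Int.sign (2 * c + 1) * (x 1 ^ 2 * extendZero e v (c + 1)) -
      Int.sign (2 * c) * (x 2 ^ (a (k - c.natAbs) + 1) * extendZero e v c) :=
  sum_skewMatrix_smul (ζ := fun i ↦ x 2 ^ (a i + 1)) v hi

theorem exists_dotProduct_sq_eq_gorensteinMap (v : ι → R) {i : ι} {c : ℤ} (hi : (e i : ℤ) = -c)
    (ha : 1 ≤ a (k - c.natAbs)) :
    ∃ r, (fun j ↦ x j ^ 2) ⬝ᵥ ![Int.sign (2 * c - 1) * extendZero e v (c - 1),
      Int.sign (2 * c + 1) * extendZero e v (c + 1), r] = gorensteinMap x a e v i := by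
  obtain ⟨n, hn⟩ := Nat.exists_eq_add_of_le ha
  refine ⟨-(Int.sign (2 * c) * x 2 ^ n * extendZero e v c), ?_⟩
  rw [gorensteinMap_apply v hi, hn, dotProduct, Fin.sum_univ_three]
  simp
  ring

theorem IsKoszulAcyclic.mem_of_gorensteinMap_mem (hx : IsKoszulAcyclic x) (hk : 2 ≤ k)
    (ha : ∀ i ≠ 0, 1 ≤ a i) {v : ι → R}
    (hv : ∀ i, gorensteinMap x a e v i ∈ Ideal.span (Set.range (gorensteinGens x a e))) (i : ι) :
    v i ∈ Ideal.span (Set.range x) := by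
  have key (c : ℤ) (hc : c.natAbs < k) : extendZero e v (c - 1) ∈ Ideal.span (Set.range x) ∧
      extendZero e v (c + 1) ∈ Ideal.span (Set.range x) := by
    obtain ⟨j, hj⟩ := e.surjective ⟨-c, by simp only [Set.mem_Icc]; lia⟩
    obtain ⟨r, hr⟩ := exists_dotProduct_sq_eq_gorensteinMap (x := x) v (c := c) (by rw [hj])
      (ha (k - c.natAbs) (by lia))
    obtain ⟨b, hb, hbv⟩ := exists_dotProduct_eq_of_mem_mul_span (Ideal.span_le.2
      (Set.range_subset_iff.2 (gorensteinGens_mem hk ha)) (hv j))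
    have hmem (l) := (Submodule.sub_mem_iff_left _ (hb l)).1 <|
      hx.mem_of_sq_dotProduct_eq_zero (u := _ - b) (by rw [dotProduct_sub, hr, hbv, sub_self]) l
    exact ⟨(Ideal.unit_mul_mem_iff_mem _ (isUnit_intCast_sign (by lia))).1 (hmem 0),
      (Ideal.unit_mul_mem_iff_mem _ (isUnit_intCast_sign (by lia))).1 (hmem 1)⟩
  have hi := (e i).2
  simp only [Set.mem_Icc] at hi
  rw [← extendZero_apply e v i]
  obtain h | h := lt_or_ge 0 (e i : ℤ)
  · simpa using (key (e i - 1) (by lia)).2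
  · simpa using (key (e i + 1) (by lia)).1

theorem isGorensteinResolution_gorensteinMap (hx : IsKoszulAcyclic x) (hk : 2 ≤ k)
    (ha : ∀ i ≠ 0, 1 ≤ a i) :
    IsGorensteinResolution (Ideal.span (Set.range x)) (gorensteinGens x a e)
      (gorensteinMap x a e) where
  mem_sq i := by
    refine Ideal.mul_mono_right (Ideal.span_le.2 (Set.range_subset_iff.2 fun j ↦ ?_))
      (gorensteinGens_mem hk ha i)
    exact pow_mem_span x j two_ne_zero
  map_mem := gorensteinMap_mem
  dotProduct_map := pfaffian_dotProduct_skewMatrix_mulVec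
  map_self := skewMatrix_mulVec_pfaffian _ _ _ e
  exists_map_eq _ := exists_skewMatrix_mulVec_eq hx (mem_radical_span_gorensteinGens x a e)
  exists_eq_smul _ := exists_eq_smul_pfaffian hx (mem_radical_span_gorensteinGens x a e)
  eq_zero_of_smul_eq_zero _ :=
    eq_zero_of_smul_pfaffian_eq_zero hx (mem_radical_span_gorensteinGens x a e)
  mem_of_map_mem _ := hx.mem_of_gorensteinMap_mem hk ha

end PfaffianIdeal

section Comparison

open Sum

variable {R : Type*} [CommRing R] {x : Fin 3 → R} {a : ℕ → ℕ} {k : ℕ}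

theorem exists_cross_eq_pfaffian_natCast (hk : 2 ≤ k) (ha : ∀ i ≠ 0, 1 ≤ a i) {n : ℕ} (hn : n < k) :
    ∃ q, x ⨯₃ q = ![x 0 * pfaffian (x 0 ^ 2) (x 1 ^ 2) (fun i ↦ x 2 ^ (a i + 1)) k n,
        x 1 * pfaffian (x 0 ^ 2) (x 1 ^ 2) (fun i ↦ x 2 ^ (a i + 1)) k (n + 2 : ℕ),
        -(x 2 ^ a (k - (n + 1)) *
          pfaffian (x 0 ^ 2) (x 1 ^ 2) (fun i ↦ x 2 ^ (a i + 1)) k (n + 1 : ℕ))] ∧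
      ∀ j, q j ∈ Ideal.span (Set.range x) * Ideal.span (Set.range x) := by
  obtain ⟨l, rfl⟩ := Nat.exists_eq_add_of_lt hn
  have hx := mem_span_range_self x
  let K := continuant (fun i ↦ x 2 ^ (a i + 1)) (x 0 ^ 2 * x 1 ^ 2)
  refine ⟨![0, -(x 2 ^ a l * x 0 ^ (2 * n + 1) * K (l + 1)), -(x 0 ^ (2 * n + 3) * x 1 * K l)],
    ?_, fun j ↦ ?_⟩
  · simp only [pfaffian_natCast, show n + l + 1 + 1 - n = l + 2 by lia,
      show n + l + 1 + 1 - (n + 2) = l by lia, show n + l + 1 + 1 - (n + 1) = l + 1 by lia,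
      show n + l + 1 - (n + 1) = l by lia, cross_apply, continuant]
    ext j
    fin_cases j <;> simp [K] <;> ring
  · have h₁ : x 2 ^ a l * x 0 ^ (2 * n + 1) ∈
        Ideal.span (Set.range x) * Ideal.span (Set.range x) := by
      obtain rfl | hl := eq_or_ne l 0
      · rw [pow_succ]
        exact Ideal.mul_mem_left _ _ (Ideal.mul_mem_mul (pow_mem_span x 0 (by lia)) (hx 0))
      · exact Ideal.mul_mem_mul (pow_mem_span x 2 (Nat.ne_zero_of_lt (ha l hl)))
          (pow_mem_span x 0 (by simp))
    fin_cases j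
    · exact zero_mem _
    · exact neg_mem (Ideal.mul_mem_right _ _ h₁)
    · exact neg_mem (Ideal.mul_mem_right _ _
        (Ideal.mul_mem_mul (pow_mem_span x 0 (by simp)) (hx 1)))

theorem exists_cross_eq_pfaffian_neg (hk : 2 ≤ k) (ha : ∀ i ≠ 0, 1 ≤ a i) {n : ℕ} (hn : n < k) :
    ∃ q, x ⨯₃ q =
      ![-(x 0 * pfaffian (x 0 ^ 2) (x 1 ^ 2) (fun i ↦ x 2 ^ (a i + 1)) k (-(n + 2 : ℕ))),
        -(x 1 * pfaffian (x 0 ^ 2) (x 1 ^ 2) (fun i ↦ x 2 ^ (a i + 1)) k (-n)),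
        x 2 ^ a (k - (n + 1)) *
          pfaffian (x 0 ^ 2) (x 1 ^ 2) (fun i ↦ x 2 ^ (a i + 1)) k (-(n + 1 : ℕ))] ∧
      ∀ j, q j ∈ Ideal.span (Set.range x) * Ideal.span (Set.range x) := by
  have hy : Set.range ![x 1, x 0, x 2] = Set.range x := by
    rw [← (Equiv.swap (0 : Fin 3) 1).surjective.range_comp x]
    congr 1
    ext j
    fin_cases j <;> rfl
  obtain ⟨q, hq, hqI⟩ := exists_cross_eq_pfaffian_natCast (x := ![x 1, x 0, x 2]) hk ha hn
  rw [hy] at hqI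
  refine ⟨![q 1, q 0, q 2], ?_, fun j ↦ ?_⟩
  · simp only [pfaffian_neg]
    ext j
    fin_cases j
    · simpa [cross_apply] using congr(-$hq 1)
    · simpa [cross_apply] using congr(-$hq 0)
    · simpa [cross_apply] using congr(-$hq 2)
  · fin_cases j
    exacts [hqI 1, hqI 0, hqI 2]

theorem exists_cross_eq_pfaffian (hk : 2 ≤ k) (ha : ∀ i ≠ 0, 1 ≤ a i) {c : ℤ} (hc : c.natAbs ≤ k) :
    ∃ q, x ⨯₃ q =
        ![Int.sign (2 * c - 1) *
            (x 0 * pfaffian (x 0 ^ 2) (x 1 ^ 2) (fun i ↦ x 2 ^ (a i + 1)) k (c - 1)),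
          Int.sign (2 * c + 1) *
            (x 1 * pfaffian (x 0 ^ 2) (x 1 ^ 2) (fun i ↦ x 2 ^ (a i + 1)) k (c + 1)),
          -(Int.sign (2 * c) * (x 2 ^ a (k - c.natAbs) *
            pfaffian (x 0 ^ 2) (x 1 ^ 2) (fun i ↦ x 2 ^ (a i + 1)) k c))] ∧
      ∀ j, q j ∈ Ideal.span (Set.range x) * Ideal.span (Set.range x) := by
  obtain rfl | hc₀ := eq_or_ne c 0
  · let K := continuant (fun i ↦ x 2 ^ (a i + 1)) (x 0 ^ 2 * x 1 ^ 2)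
    refine ⟨![0, 0, -(x 0 * x 1 * K k)], ?_, fun j ↦ ?_⟩
    · ext j
      fin_cases j <;> simp [K, pfaffian, cross_apply] <;> ring
    · fin_cases j
      · exact zero_mem _
      · exact zero_mem _
      · exact neg_mem (Ideal.mul_mem_right _ _
          (Ideal.mul_mem_mul (mem_span_range_self x 0) (mem_span_range_self x 1)))
  obtain ⟨n, rfl | rfl⟩ := c.eq_nat_or_neg
  all_goals obtain ⟨n, rfl⟩ := Nat.exists_eq_succ_of_ne_zero (n := n) (by lia)
  · obtain ⟨q, hq, hqI⟩ := exists_cross_eq_pfaffian_natCast (x := x) hk ha (n := n) (by lia)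
    refine ⟨q, hq.trans ?_, hqI⟩
    rw [Int.sign_eq_one_of_pos (by lia), Int.sign_eq_one_of_pos (by lia),
      Int.sign_eq_one_of_pos (by lia), show ((n + 1 : ℕ) : ℤ) - 1 = n by lia,
      show ((n + 1 : ℕ) : ℤ) + 1 = (n + 2 : ℕ) by lia, Int.natAbs_natCast]
    simp
  · obtain ⟨q, hq, hqI⟩ := exists_cross_eq_pfaffian_neg (x := x) hk ha (n := n) (by lia)
    refine ⟨q, hq.trans ?_, hqI⟩
    rw [Int.sign_eq_neg_one_of_neg (by lia), Int.sign_eq_neg_one_of_neg (by lia),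
      Int.sign_eq_neg_one_of_neg (by lia), show -((n + 1 : ℕ) : ℤ) - 1 = -(n + 2 : ℕ) by lia,
      show -((n + 1 : ℕ) : ℤ) + 1 = -n by lia, Int.natAbs_neg, Int.natAbs_natCast]
    simp

/-- The comparison map from the Gorenstein resolution to the Koszul complex on `x` that lifts the
coordinate listed under `-c`: row `-c` of `gorensteinMap x a e`, divided by `x`. -/
noncomputable def gorensteinToKoszul {ι : Type*} (x : Fin 3 → R) (a : ℕ → ℕ)
    (e : ι ≃ Set.Icc (-(k : ℤ)) k) (c : ℤ) : (ι → R) →ₗ[R] Fin 3 → R where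
  toFun v := ![Int.sign (2 * c - 1) * (x 0 * extendZero e v (c - 1)),
    Int.sign (2 * c + 1) * (x 1 * extendZero e v (c + 1)),
    -(Int.sign (2 * c) * (x 2 ^ a (k - c.natAbs) * extendZero e v c))]
  map_add' v w := by
    have h := (Function.ExtendByZero.linearMap R fun i ↦ (e i : ℤ)).map_add v w
    change extendZero e (v + w) = extendZero e v + extendZero e w at h
    ext j
    fin_cases j <;> simp [h] <;> ring
  map_smul' r v := by
    have h := (Function.ExtendByZero.linearMap R fun i ↦ (e i : ℤ)).map_smul r v
    change extendZero e (r • v) = r • extendZero e v at h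
    ext j
    fin_cases j <;> simp [h] <;> ring

theorem gorensteinToKoszul_two {ι : Type*} (x : Fin 3 → R) (a : ℕ → ℕ)
    (e : ι ≃ Set.Icc (-(k : ℤ)) k) (c : ℤ) (v : ι → R) :
    gorensteinToKoszul x a e c v 2 =
      -(Int.sign (2 * c) * (x 2 ^ a (k - c.natAbs) * extendZero e v c)) := rfl

theorem exists_isKoszulLift {ι : Type*} [Fintype ι] {e : ι ≃ Set.Icc (-(k : ℤ)) k} (hk : 2 ≤ k)
    (ha : ∀ i ≠ 0, 1 ≤ a i) (i : ι) :
    ∃ q, IsKoszulLift x (gorensteinGens x a e) (gorensteinMap x a e) i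
      (gorensteinToKoszul x a e (-(e i))) q := by
  have hi := (e i).2
  simp only [Set.mem_Icc] at hi
  obtain ⟨q, hq, hqI⟩ := exists_cross_eq_pfaffian (x := x) hk ha (c := -(e i)) (by lia)
  refine ⟨q, fun v ↦ ?_, fun v j hj ↦ ?_, ?_, hqI⟩
  · rw [gorensteinMap_apply v (neg_neg _).symm, dotProduct, Fin.sum_univ_three]
    simp [gorensteinToKoszul]
    ring
  · fin_cases j
    · exact Ideal.mul_mem_left _ _ (Ideal.mul_mem_right _ _ (mem_span_range_self x 0))
    · exact Ideal.mul_mem_left _ _ (Ideal.mul_mem_right _ _ (mem_span_range_self x 1))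
    · exact absurd rfl hj
  · rw [hq, ← extendZero_pfaffian _ _ _ e]
    rfl

theorem exists_isTrimming {ρ σ τ : Type*} [Fintype ρ] [Fintype σ] [Fintype τ]
    {e : (ρ ⊕ σ) ⊕ (σ ⊕ τ) ≃ Set.Icc (-(k : ℤ)) k} (hx : IsKoszulAcyclic x) (hk : 2 ≤ k)
    (ha : ∀ i ≠ 0, 1 ≤ a i)
    (hσ : ∀ s, (e (inr (inl s)) : ℤ) = k ∧ (e (inl (inr s)) : ℤ) = -k ∧ a 0 = 0)
    (hτ : ∀ t, a (k - (e (inr (inr t)) : ℤ).natAbs) ≠ 0) :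
    ∃ q, IsTrimming x (gorensteinGens x a e) (gorensteinMap x a e)
      (fun t ↦ gorensteinToKoszul x a e (-(e (inr t)))) q := by
  choose q hq using fun t : σ ⊕ τ ↦ exists_isKoszulLift (x := x) (e := e) hk ha (inr t)
  refine ⟨q, hx, isGorensteinResolution_gorensteinMap hx hk ha, hq, fun s v ↦ ?_, fun t v ↦ ?_⟩
  · obtain ⟨hs, hs', h₀⟩ := hσ s
    rw [gorensteinToKoszul_two, hs, ← hs', extendZero_apply, hs',
      Int.sign_eq_neg_one_of_neg (by lia)]
    simp [h₀]
  · rw [gorensteinToKoszul_two, Int.natAbs_neg]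
    exact neg_mem <| Ideal.mul_mem_left _ _ <| Ideal.mul_mem_right _ _ <| pow_mem_span x 2 (hτ t)

end Comparison

section Realization

open Module Sum

/-- A basis of `N` followed by some basis of `M`. -/
noncomputable def prodBasis {R M N : Type*} [CommRing R] [Nontrivial R] [AddCommGroup M]
    [Module R M] [Module.Free R M] [Module.Finite R M] [AddCommGroup N] [Module R N] {p r : ℕ}
    (b : Basis (Fin r) R N) (hp : finrank R M = p) : Basis (Fin (r + p)) R (N × M) :=
  (b.prod (finBasisOfFinrankEq R M hp)).reindex finSumFinEquiv

section ProdBasis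

variable {R M N : Type*} [CommRing R] [Nontrivial R] [AddCommGroup M] [Module R M] [Module.Free R M]
  [Module.Finite R M] [AddCommGroup N] [Module R N] {p r : ℕ} (b : Basis (Fin r) R N)
  (hp : finrank R M = p)

theorem prodBasis_castAdd (i : Fin r) : prodBasis b hp (Fin.castAdd p i) = (b i, 0) := by
  simp [prodBasis]

theorem prodBasis_natAdd_fst (i : Fin p) : (prodBasis b hp (Fin.natAdd r i)).1 = 0 := by
  simp [prodBasis]

end ProdBasis

theorem prodBasis_fst_dotProduct {R M M' : Type*} [CommRing R] [Nontrivial R] [AddCommGroup M]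
    [Module R M] [Module.Free R M] [Module.Finite R M] [AddCommGroup M'] [Module R M']
    [Module.Free R M'] [Module.Finite R M'] {p p' r : ℕ} (hp : finrank R M = p)
    (hp' : finrank R M' = p') (i : Fin (r + p)) (j : Fin (r + p')) :
    (prodBasis (Pi.basisFun R (Fin r)) hp i).1 ⬝ᵥ (prodBasis (Pi.basisFun R (Fin r)) hp' j).1 =
      if (i : ℕ) = j ∧ (i : ℕ) < r then 1 else 0 := by
  induction i using Fin.addCases with
  | right i => simp [prodBasis_natAdd_fst]
  | left i =>
    induction j using Fin.addCases with
    | right j => simp [prodBasis_natAdd_fst, show (i : ℕ) ≠ r + j by lia]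
    | left j => simp [prodBasis_castAdd, Pi.single_apply, Fin.ext_iff, eq_comm]

variable {R : Type} [CommRing R] [IsLocalRing R]

theorem hasTorClassGWithRanks_of_basis {F₁ F₂ F₃ : Type*} [AddCommGroup F₁] [Module R F₁]
    [AddCommGroup F₂] [Module R F₂] [AddCommGroup F₃] [Module R F₃] {m l n r : ℕ} [NeZero n]
    (hm : r ≤ m) (hl : r ≤ l) (b₁ : Basis (Fin m) R F₁) (b₂ : Basis (Fin l) R F₂)
    (b₃ : Basis (Fin n) R F₃) {d₁ : F₁ →ₗ[R] R} {d₂ : F₂ →ₗ[R] F₁} {d₃ : F₃ →ₗ[R] F₂}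
    (h₁₂ : LinearMap.ker d₁ = LinearMap.range d₂) (h₂₃ : LinearMap.ker d₂ = LinearMap.range d₃)
    (hd₃ : LinearMap.ker d₃ = ⊥) (hmin₁ : ∀ u, d₁ u ∈ maximalIdeal R)
    (hmin₂ : ∀ z, d₂ z ∈ maximalIdeal R • (⊤ : Submodule R F₁))
    (hmin₃ : ∀ w, d₃ w ∈ maximalIdeal R • (⊤ : Submodule R F₂))
    {m₁₁ : F₁ →ₗ[R] F₁ →ₗ[R] F₂} {m₁₂ : F₁ →ₗ[R] F₂ →ₗ[R] F₃} (h : IsDGProduct d₁ d₂ d₃ m₁₁ m₁₂)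
    (h₁₁ : ∀ a b, m₁₁ a b ∈ maximalIdeal R • (⊤ : Submodule R F₂))
    (hG : ∀ i j, m₁₂ (b₁ i) (b₂ j) - (if (i : ℕ) = j ∧ (i : ℕ) < r then b₃ 0 else 0) ∈
      maximalIdeal R • (⊤ : Submodule R F₃)) :
    HasTorClassGWithRanks R (LinearMap.range d₁) m n r := by
  let e₁ := b₁.equivFun
  let e₂ := b₂.equivFun
  let e₃ := b₃.equivFun
  refine ⟨l, Nat.pos_of_neZero n, hm, hl, d₁ ∘ₗ e₁.symm, e₁ ∘ₗ d₂ ∘ₗ e₂.symm, e₂ ∘ₗ d₃ ∘ₗ e₃.symm,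
    (m₁₁.compl₁₂ (e₁.symm : _ →ₗ[R] F₁) (e₁.symm : _ →ₗ[R] F₁)).compr₂ e₂.toLinearMap,
    (m₁₂.compl₁₂ (e₁.symm : _ →ₗ[R] F₁) (e₂.symm : _ →ₗ[R] F₂)).compr₂ e₃.toLinearMap,
    LinearEquiv.range_comp _ _, ?_, ?_, ?_, fun v ↦ hmin₁ _,
    fun v ↦ map_mem_smul_top e₁.toLinearMap (hmin₂ _),
    fun v ↦ map_mem_smul_top e₂.toLinearMap (hmin₃ _), fun a b ↦ ?_,
    fun a ↦ ?_, fun a b ↦ ?_, fun a z ↦ ?_, fun a b c ↦ ?_,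
    fun a b ↦ map_mem_smul_top e₂.toLinearMap (h₁₁ _ _), fun i j ↦ ?_⟩
  · rw [LinearMap.ker_comp, h₁₂, LinearMap.range_comp, LinearEquiv.range_comp,
      ← Submodule.map_equiv_eq_comap_symm]
  · rw [LinearEquiv.ker_comp, LinearMap.ker_comp, h₂₃, LinearMap.range_comp, LinearEquiv.range_comp,
      ← Submodule.map_equiv_eq_comap_symm]
  · rw [LinearEquiv.ker_comp, LinearMap.ker_comp, hd₃, Submodule.comap_bot, LinearEquiv.ker]
  · simp [h.leibniz₁₁]
  · simp [h.mul_self]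
  · simp [h.mul_swap (e₁.symm a)]
  · simp [h.leibniz₁₂]
  · simp [h.assoc (LinearMap.ker_eq_bot.1 hd₃) (e₁.symm a)]
  · convert map_mem_smul_top e₃.toLinearMap (hG i j) using 1
    rw [map_sub, apply_ite e₃.toLinearMap]
    simp [e₁, e₂, e₃, Finsupp.single_eq_pi_single]

theorem IsTrimming.hasTorClassGWithRanks {σ τ : Type*} [Fintype σ] [Fintype τ] {r n : ℕ}
    {x : Fin 3 → R} {g : (Fin r ⊕ σ) ⊕ (σ ⊕ τ) → R}
    {φ : ((Fin r ⊕ σ) ⊕ (σ ⊕ τ) → R) →ₗ[R] (Fin r ⊕ σ) ⊕ (σ ⊕ τ) → R}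
    {Ξ : σ ⊕ τ → ((Fin r ⊕ σ) ⊕ (σ ⊕ τ) → R) →ₗ[R] Fin 3 → R} {q : σ ⊕ τ → Fin 3 → R}
    (h : IsTrimming x g φ Ξ q) (h𝔪 : Ideal.span (Set.range x) = maximalIdeal R)
    (hn : n = 1 + Fintype.card (σ ⊕ τ)) :
    HasTorClassGWithRanks R (LinearMap.range (Trimmed.d₁ x g)) (r + 3 * (n - 1)) n r := by
  subst hn
  have hF₁ : finrank R (σ ⊕ τ → Fin 3 → R) = 3 * (1 + Fintype.card (σ ⊕ τ) - 1) := by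
    simp [finrank_pi_fintype, mul_comm]
  let b₁ := prodBasis (Pi.basisFun R (Fin r)) hF₁
  let b₂ := prodBasis (M := (σ ⊕ τ → R) × (σ ⊕ τ → Fin 3 → R)) (Pi.basisFun R (Fin r)) rfl
  let b₃ := prodBasis (Basis.singleton (Fin 1) R) (finrank_fintype_fun_eq_card R (η := σ ⊕ τ))
  have : NeZero (1 + Fintype.card (σ ⊕ τ)) := ⟨by lia⟩
  have hb₃ : b₃ 0 = (1, 0) :=
    (prodBasis_castAdd _ _ 0).trans (by rw [Basis.singleton_apply])
  obtain ⟨m₁₁, m₁₂, hm⟩ := exists_isDGProduct b₁ (Trimmed.ker_d₁ h) (Trimmed.ker_d₂ h)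
    (LinearMap.ker_eq_bot.1 (Trimmed.ker_d₃ h))
  refine hasTorClassGWithRanks_of_basis (Nat.le_add_right _ _) (Nat.le_add_right _ _) b₁ b₂ b₃
    (Trimmed.ker_d₁ h) (Trimmed.ker_d₂ h) (Trimmed.ker_d₃ h)
    (fun u ↦ h𝔪 ▸ Ideal.mul_le_left (Trimmed.d₁_mem h u)) (h𝔪 ▸ Trimmed.d₂_mem h)
    (h𝔪 ▸ Trimmed.d₃_mem h) hm (h𝔪 ▸ Trimmed.mul₁₁_mem h hm) fun i j ↦ ?_
  rw [← h𝔪, hb₃, mem_smul_top_prod, mem_smul_top_pi_self, mem_smul_top_self]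
  have hdot := prodBasis_fst_dotProduct hF₁
    (rfl : finrank R ((σ ⊕ τ → R) × (σ ⊕ τ → Fin 3 → R)) = _) i j
  have h₁ := Trimmed.mul₁₂_fst_sub_mem h hm (b₁ i) (b₂ j)
  have h₂ := Trimmed.mul₁₂_snd_mem h hm (b₁ i) (b₂ j)
  rw [hdot] at h₁
  split_ifs at h₁ ⊢ <;> exact ⟨h₁, by simpa using h₂⟩

theorem exists_hasTorClassGWithRanks_of_equiv {σ τ : Type*} [Fintype σ] [Fintype τ] {r n k : ℕ}
    {x : Fin 3 → R} (hx : IsKoszulAcyclic x) (h𝔪 : Ideal.span (Set.range x) = maximalIdeal R)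
    (hk : 2 ≤ k) {a : ℕ → ℕ} (ha : ∀ i ≠ 0, 1 ≤ a i)
    (e : (Fin r ⊕ σ) ⊕ (σ ⊕ τ) ≃ Set.Icc (-(k : ℤ)) k)
    (hσ : ∀ s, (e (inr (inl s)) : ℤ) = k ∧ (e (inl (inr s)) : ℤ) = -k ∧ a 0 = 0)
    (hτ : ∀ t, a (k - (e (inr (inr t)) : ℤ).natAbs) ≠ 0) (hn : n = 1 + Fintype.card (σ ⊕ τ)) :
    ∃ J : Ideal R, HasTorClassGWithRanks R J (r + 3 * (n - 1)) n r := by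
  obtain ⟨q, hq⟩ := exists_isTrimming hx hk ha hσ hτ
  exact ⟨_, hq.hasTorClassGWithRanks h𝔪 hn⟩

theorem exists_hasTorClassGWithRanks_of_add_sub_one_eq {r n k : ℕ} {x : Fin 3 → R}
    (hx : IsKoszulAcyclic x) (h𝔪 : Ideal.span (Set.range x) = maximalIdeal R) (hk : 2 ≤ k)
    (hn : n ≠ 0) (hrn : r + (n - 1) = 2 * k + 1) :
    ∃ J : Ideal R, HasTorClassGWithRanks R J (r + 3 * (n - 1)) n r :=
  exists_hasTorClassGWithRanks_of_equiv (σ := Fin 0) (τ := Fin (n - 1)) hx h𝔪 hk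
    (a := fun _ ↦ 1) (fun _ _ ↦ le_rfl) (Fintype.equivOfCardEq (by simp; lia)) (by simp) (by simp)
    (by simp; lia)

theorem exists_hasTorClassGWithRanks_of_add_eq {r n k : ℕ} {x : Fin 3 → R} (hx : IsKoszulAcyclic x)
    (h𝔪 : Ideal.span (Set.range x) = maximalIdeal R) (hk : 2 ≤ k) (hn : 2 ≤ n)
    (hrn : r + n = 2 * k + 1) :
    ∃ J : Ideal R, HasTorClassGWithRanks R J (r + 3 * (n - 1)) n r := by
  classical
  let e₀ : (Fin r ⊕ Fin 1) ⊕ (Fin 1 ⊕ Fin (n - 2)) ≃ Set.Icc (-(k : ℤ)) k :=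
    Fintype.equivOfCardEq (by simp; lia)
  let e₁ := e₀.setValue (inl (inr 0)) ⟨-k, by simp⟩
  let e := e₁.setValue (inr (inl 0)) ⟨k, by simp⟩
  have he₁ : e₁ (inl (inr 0)) = ⟨-k, by simp⟩ := Equiv.setValue_eq _ _ _
  have hk₁ : e (inr (inl 0)) = ⟨k, by simp⟩ := Equiv.setValue_eq _ _ _
  have hk₂ : e (inl (inr 0)) = ⟨-k, by simp⟩ := by
    refine (congrArg e₁ (Equiv.swap_apply_of_ne_of_ne (by simp) fun h ↦ ?_)).trans he₁
    rw [Equiv.eq_symm_apply, he₁, Subtype.mk.injEq] at h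
    lia
  refine exists_hasTorClassGWithRanks_of_equiv hx h𝔪 hk (a := fun i ↦ min i 1) (by simp; lia) e
    (by simp [hk₁, hk₂]) (fun t ↦ ?_) (by simp; lia)
  have h₁ : e (inr (inr t)) ≠ ⟨k, by simp⟩ := hk₁ ▸ e.injective.ne (by simp)
  have h₂ : e (inr (inr t)) ≠ ⟨-k, by simp⟩ := hk₂ ▸ e.injective.ne (by simp)
  have ht := (e (inr (inr t))).2
  simp only [ne_eq, Subtype.ext_iff, Set.mem_Icc] at h₁ h₂ ht
  lia

end Realization

end TorClassG

theorem realizability_classG_case1_general {R : Type} [CommRing R] [IsLocalRing R] (x : Fin 3 → R)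
    (hreg : RingTheory.Sequence.IsWeaklyRegular R [x 0, x 1, x 2])
    (hx : Ideal.span {x 0, x 1, x 2} = maximalIdeal R) (n r : ℕ) (hn : 2 ≤ n) (hrn : 5 ≤ r + n) :
    ∃ J : Ideal R, HasTorClassGWithRanks R J (r + 3 * (n - 1)) n r := by
  have hx' : Ideal.span (Set.range x) = maximalIdeal R := by
    rw [← hx]
    congr 1
    ext y
    simp [Fin.exists_fin_succ, eq_comm]
  have hK := TorClassG.isKoszulAcyclic_of_isWeaklyRegular hreg
  obtain ⟨l, hl | hl⟩ := Nat.even_or_odd' (r + n)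
  · exact TorClassG.exists_hasTorClassGWithRanks_of_add_sub_one_eq (k := l - 1) hK hx'
      (by lia) (by lia) (by lia)
  · exact TorClassG.exists_hasTorClassGWithRanks_of_add_eq hK hx' (by lia) hn hl

/-!
STATEMENT 14 (part of Corollary 5.8, case (1)): let `(R,𝔪,k)` be a regular local ring
of dimension 3 and `(m,n,r)` positive integers with `r = m - 3(n-1) ≥ 2`, `n ≥ 2` and
`m ≥ 2n+3 ≥ 7`.  Then there is an ideal `J ⊆ R` with `pd_R(R/J) = 3` such that `R/J`
has Tor-algebra class `G(r)` and realizes the tuple `(m,n,r)`.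
-/
theorem realizability_classG_case1
    {R : Type} [CommRing R] [IsNoetherianRing R] [IsLocalRing R]
    -- regular local of dimension 3
    (x : Fin 3 → R)
    (hreg : RingTheory.Sequence.IsRegular R [x 0, x 1, x 2])
    (hx : Ideal.span {x 0, x 1, x 2} = maximalIdeal R)
    (m n r : ℕ)
    (harith : r + 3 * (n - 1) = m) (hr : 2 ≤ r) (hn : 2 ≤ n)
    (hm : 2 * n + 3 ≤ m) (hm7 : 7 ≤ 2 * n + 3) :
    ∃ J : Ideal R, HasTorClassGWithRanks R J m n r :=
  harith ▸ realizability_classG_case1_general x hreg.toIsWeaklyRegular hx n r hn (by lia)
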